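/- For each c⃗ ∈ (0,1)^d with c_1+⋯+c_d=1 and each i ∈ {1,…,d}, the component ω_{c⃗,i} of the vector equilibrium measure for an Angelesco system is absolutely continuous, dω_{c⃗,i}(x)=ω′_{c⃗,i}(x)dx, its density ω′_{c⃗,i}(x) is non-vanishing on the open interval (α_{c⃗,i}, β_{c⃗,i}), and at each endpoint the density has pure square-root behavior: at β_{c⃗,i}, exactly one of the limits lim_{x↑β_{c⃗,i}} ω′_{c⃗,i}(x)·(β_{c⃗,i}−x)^{1/2} or lim_{x↑β_{c⃗,i}} ω′_{c⃗,i}(x)·(β_{c⃗,i}−x)^{−1/2} exists and is positive and finite, and the analogous claim holds at α_{c⃗,i}. -/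

import Mathlib

open MeasureTheory Set Filter Topology Polynomial

noncomputable section

/-- The arcsine distribution `dω_[a,b](x) = dx/(π √((x−a)(b−x)))` on `[a,b]`. -/
def arcsineMeasure (a b : ℝ) : Measure ℝ :=
  (volume.restrict (Set.Icc a b)).withDensity
    fun x => ENNReal.ofReal (1 / (Real.pi * Real.sqrt ((x - a) * (b - x))))

/-- The branch of `√((z−a)(z−b))` holomorphic off `[a,b]` with `w(z) = z + O(1)` at `∞`. -/
def wBranch (a b : ℝ) (z : ℂ) : ℂ :=
  (z - a) * Complex.exp ((1 / 2 : ℂ) * Complex.log ((z - b) / (z - a)))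

/-- Cauchy transform `∫ u(x)/(z−x) dω_[a,b](x)`. -/
def cauchyT (a b : ℝ) (u : ℝ → ℝ) (z : ℂ) : ℂ :=
  ∫ x, (u x : ℂ) / (z - (x : ℂ)) ∂(arcsineMeasure a b)

/-- `H_Δ u`, the harmonic extension of `u` off `Δ = [a,b]`. -/
def harmExt (a b : ℝ) (u : ℝ → ℝ) (z : ℂ) : ℝ :=
  (wBranch a b z * cauchyT a b u z).re

/-- The outer function `Ω_Δ(f,z) := exp( w_Δ(z) ∫ log f(x)/(z−x) dω_Δ(x) )`. -/
def OmegaFun (a b : ℝ) (f : ℝ → ℝ) (z : ℂ) : ℂ :=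
  Complex.exp (wBranch a b z * cauchyT a b (fun x => Real.log (f x)) z)

/-- The value of `Ω_Δ(f,·)` at infinity: `exp( ∫ log f dω_Δ )`. -/
def OmegaInf (a b : ℝ) (f : ℝ → ℝ) : ℝ :=
  Real.exp (∫ x, Real.log (f x) ∂(arcsineMeasure a b))

/-- Radon–Nikodym derivative `μ′` of `μ` with respect to Lebesgue measure. -/
def lebDeriv (μ : Measure ℝ) (x : ℝ) : ℝ := (μ.rnDeriv volume x).toReal

/-- `v_Δ(x) = π μ′(x) √((x−a)(b−x))`, the density of `μ|_Δ` w.r.t. the arcsine law. -/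
def vDens (μ : Measure ℝ) (a b : ℝ) (x : ℝ) : ℝ :=
  Real.pi * lebDeriv μ x * Real.sqrt ((x - a) * (b - x))

/-- Szegő function `G(e^h μ|_[a,b], z)`. -/
def szegoG (μ : Measure ℝ) (a b : ℝ) (h : ℝ → ℝ) (z : ℂ) : ℂ :=
  OmegaFun a b (fun x => Real.sqrt (Real.exp (h x) * vDens μ a b x)) z

/-- Szegő function `G(e^h μ|_[a,b], ·)` at infinity. -/
def szegoGInf (μ : Measure ℝ) (a b : ℝ) (h : ℝ → ℝ) : ℝ :=
  OmegaInf a b fun x => Real.sqrt (Real.exp (h x) * vDens μ a b x)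

/-- Support of a measure on `ℝ`. -/
def msupp (μ : Measure ℝ) : Set ℝ := {x | ∀ ε > 0, 0 < μ (Metric.ball x ε)}

def suppInf (μ : Measure ℝ) : ℝ := sInf (msupp μ)
def suppSup (μ : Measure ℝ) : ℝ := sSup (msupp μ)

/-- `Δ(μ)`, the convex hull of the support of `μ`. -/
def convHullSupp (μ : Measure ℝ) : Set ℝ := Set.Icc (suppInf μ) (suppSup μ)

/-- Logarithmic potential `V^ω(x) = −∫ log|x−t| dω(t)`. -/
def logPot (ω : Measure ℝ) (x : ℝ) : ℝ := -∫ t, Real.log |x - t| ∂ω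

/-- The Szegő condition `μ ∈ Sz([a,b])`. -/
def SzCond (μ : Measure ℝ) (a b : ℝ) : Prop :=
  Integrable (fun x => Real.log (lebDeriv μ x)) (arcsineMeasure a b)

/-- The increasing affine map of `[a,b]` onto `[c,d]`. -/
def affIcc (a b c d : ℝ) (x : ℝ) : ℝ := c + ((d - c) / (b - a)) * (x - a)

/-- The uniform Szegő condition `μ ∈ USz([a,b])`. -/
def USzCond (μ : Measure ℝ) (a b : ℝ) : Prop :=
  SzCond μ a b ∧
  ∀ A B : ℕ → ℝ, (∀ n, A n < B n) → (∀ n, Set.Icc (A n) (B n) ⊆ convHullSupp μ) →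
    Tendsto A atTop (𝓝 a) → Tendsto B atTop (𝓝 b) →
    (∀ᶠ n in atTop, SzCond μ (A n) (B n)) ∧
    Tendsto (fun n => ∫ x,
        |Real.log (lebDeriv μ x) - Real.log (lebDeriv μ (affIcc a b (A n) (B n) x))|
          ∂(arcsineMeasure a b)) atTop (𝓝 0)

/-- `P` is the `n`-th monic orthogonal polynomial with respect to `ν`. -/
def IsMonicOP (ν : Measure ℝ) (n : ℕ) (P : Polynomial ℝ) : Prop :=
  P.Monic ∧ P.natDegree = n ∧ ∀ k < n, ∫ x, x ^ k * P.eval x ∂ν = 0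

/-- The weighted measure `e^θ μ`. -/
def expWt (μ : Measure ℝ) (θ : ℝ → ℝ) : Measure ℝ :=
  μ.withDensity fun x => ENNReal.ofReal (Real.exp (θ x))

/-- An Angelesco system of `d` measures, with `Δ(μ_i) = [lo i, hi i]`. -/
structure Angelesco (d : ℕ) (μ : Fin d → Measure ℝ) (lo hi : Fin d → ℝ) : Prop where
  two_le : 2 ≤ d
  bounded : ∀ i, Bornology.IsBounded (msupp (μ i))
  infinite : ∀ i, (msupp (μ i)).Infinite
  lo_eq : ∀ i, lo i = suppInf (μ i)
  hi_eq : ∀ i, hi i = suppSup (μ i)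
  sep : ∀ i j, i < j → hi i < lo j

/-- The vector equilibrium measure `(ω_1,…,ω_d)` with parameter `c`,
with `supp ω_i = [A i, B i] ⊆ [lo i, hi i]` and masses `c i`. -/
structure VecEquil (d : ℕ) (lo hi : Fin d → ℝ) (c : Fin d → ℝ)
    (ω : Fin d → Measure ℝ) (A B : Fin d → ℝ) : Prop where
  endpoints : ∀ i, lo i ≤ A i ∧ A i < B i ∧ B i ≤ hi i
  supp : ∀ i, msupp (ω i) = Set.Icc (A i) (B i)
  mass : ∀ i, ω i Set.univ = ENNReal.ofReal (c i)
  equil : ∀ j, ∃ ℓ : ℝ,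
    (∀ x ∈ Set.Icc (A j) (B j), logPot (ω j) x + ∑ i, logPot (ω i) x = ℓ) ∧
    (∀ x ∈ Set.Icc (lo j) (hi j) \ Set.Icc (A j) (B j),
        ℓ < logPot (ω j) x + ∑ i, logPot (ω i) x)

/-- The vector `(S_1,…,S_d)` of conjugate-symmetric outer functions in `H²(D_{Δ_i})`,
positive at infinity, with boundary moduli `g_i` satisfying
`|S_{i±}|² ∏_{j≠i} S_j = v_i` a.e. on `Δ_i` (outer functions positive at infinity are
recovered from their boundary moduli by `S_i = Ω_{Δ_i}(g_i, ·)`). -/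
def IsSzegoVector (d : ℕ) (A B : Fin d → ℝ) (v : Fin d → ℝ → ℝ)
    (g : Fin d → ℝ → ℝ) (S : Fin d → ℂ → ℂ) : Prop :=
  (∀ i x, 0 ≤ g i x) ∧
  (∀ i, Integrable (fun x => Real.log (g i x)) (arcsineMeasure (A i) (B i))) ∧
  (∀ i, S i = fun z => OmegaFun (A i) (B i) (g i) z) ∧
  (∀ i, ∀ᵐ x ∂(arcsineMeasure (A i) (B i)),
    (g i x) ^ 2 * ∏ j ∈ Finset.univ.erase i, (S j (x : ℂ)).re = v i x)

/-- The operator `ℋ` with component `i` equal to `−(1/2) Σ_{j≠i} H_{[A j, B j]} u_j`. -/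
def calH (d : ℕ) (A B : Fin d → ℝ) (u : Fin d → ℝ → ℝ) (i : Fin d) (x : ℝ) : ℝ :=
  -(1 / 2) * ∑ j ∈ Finset.univ.erase i, harmExt (A j) (B j) (u j) (x : ℂ)

/-- sup norm over `[a,b]`. -/
def supIcc (a b : ℝ) (f : ℝ → ℝ) : ℝ := sSup ((fun x => |f x|) '' Set.Icc a b)

/-- Norm of `C(Δ⃗)`. -/
def vecCNorm (d : ℕ) (A B : Fin d → ℝ) (u : Fin d → ℝ → ℝ) : ℝ :=
  ∑ i, supIcc (A i) (B i) (u i)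

/-- Norm of `C¹(Δ⃗)`. -/
def vecC1Norm (d : ℕ) (A B : Fin d → ℝ) (u : Fin d → ℝ → ℝ) : ℝ :=
  ∑ i, (supIcc (A i) (B i) (u i) +
    supIcc (A i) (B i) (derivWithin (u i) (Set.Icc (A i) (B i))))

/-- membership in `C(Δ⃗)`. -/
def memVecC (d : ℕ) (A B : Fin d → ℝ) (u : Fin d → ℝ → ℝ) : Prop :=
  ∀ i, ContinuousOn (u i) (Set.Icc (A i) (B i))

/-- membership in `C¹(Δ⃗)`. -/
def memVecC1 (d : ℕ) (A B : Fin d → ℝ) (u : Fin d → ℝ → ℝ) : Prop :=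
  ∀ i, ContDiffOn ℝ 1 (u i) (Set.Icc (A i) (B i))

/-- `|w_Δ(x)|` for real `x`. -/
def wAbs (p q x : ℝ) : ℝ := Real.sqrt |(x - p) * (x - q)|

/-- Riemann–Liouville type fractional integral of order 1/2. -/
def fracInt (γ : ℝ) (θ : ℝ → ℝ) (x : ℝ) : ℝ :=
  (Real.sqrt Real.pi)⁻¹ * ∫ t in γ..x, θ t / Real.sqrt |x - t|

/-!
Let `ω` be the component on `[a, b]` and `σ` the sum of the others, so that `2 V^ω + V^σ` is
constant on `[a, b]`. Integrating this identity against the Chebyshev polynomials with respect to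
the arcsine measure `α` of `[a, b]` determines all Chebyshev moments of `ω`. They show that
`ω = h α` with `h(x) = |ω| + |σ| / 2 - (1 / 2) ∫ |w(t)| / |t - x| dσ(t)`, where
`w(t)² = (t - a) (t - b)`. Since `x ↦ 1 / |t - x|` is convex off `t`, the function `h` is concave
on a neighborhood of `[a, b]`. It is nonnegative on `[a, b]`, hence positive inside, and at an
endpoint either `h` is positive, in which case the density of `ω` blows up like the arcsine
density, or `h` vanishes there to exactly first order by concavity, and the density vanishes like a
square root.
-/

open Real (circleAverage)

section CircleAverage

lemma hasSum_circleAverage {E : Type*} [NormedAddCommGroup E] [NormedSpace ℝ E]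
    {F : ℕ → ℂ → E} {f : ℂ → E} {u : ℕ → ℝ} {c : ℂ} {R : ℝ} (hu : Summable u)
    (hF : ∀ k, CircleIntegrable (F k) c R) (hFu : ∀ k, ∀ z ∈ Metric.sphere c |R|, ‖F k z‖ ≤ u k)
    (hf : ∀ z ∈ Metric.sphere c |R|, HasSum (fun k => F k z) (f z)) :
    HasSum (fun k => circleAverage (F k) c R) (circleAverage f c R) := by
  refine HasSum.const_smul _ (intervalIntegral.hasSum_integral_of_dominated_convergence
    (fun k _ => u k) (fun k => (hF k).def'.aestronglyMeasurable) (fun k => ?_) ?_ (by simp) ?_)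
  · exact .of_forall fun θ _ => hFu k _ (circleMap_mem_sphere' c R θ)
  · exact .of_forall fun _ _ => hu
  · exact .of_forall fun θ _ => hf _ (circleMap_mem_sphere' c R θ)

lemma circleAverage_zpow (m : ℤ) :
    circleAverage (fun z : ℂ => z ^ m) 0 1 = if m = 0 then 1 else 0 := by
  split_ifs with hm
  · simp only [hm, zpow_zero, Real.circleAverage_const]
  · rw [Real.circleAverage_eq_circleIntegral one_ne_zero]
    have integrand_eq : EqOn (fun z : ℂ => (z - 0)⁻¹ • z ^ m) (fun z => (z - 0) ^ (m - 1))
        (Metric.sphere 0 1) := fun z hz => by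
      have hz0 : z ≠ 0 := Metric.ne_of_mem_sphere hz one_ne_zero
      simp only [sub_zero, smul_eq_mul, zpow_sub_one₀ hz0, mul_comm]
    rw [circleIntegral.integral_congr zero_le_one integrand_eq,
      circleIntegral.integral_sub_zpow_of_ne (by omega), smul_zero]

lemma circleIntegrable_zpow (m : ℤ) : CircleIntegrable (fun z : ℂ => z ^ m) 0 1 :=
  ContinuousOn.circleIntegrable' fun z hz =>
    (continuousAt_zpow₀ z m (.inl (Metric.ne_of_mem_sphere hz (by simp)))).continuousWithinAt

lemma ofReal_re_pow_of_norm_eq_one {z : ℂ} (hz : ‖z‖ = 1) (n : ℕ) :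
    (((z ^ n).re : ℝ) : ℂ) = (z ^ (n : ℤ) + z ^ (-n : ℤ)) / 2 := by
  rw [Complex.re_eq_add_conj, map_pow, ← Complex.inv_eq_conj hz, zpow_neg, zpow_natCast, inv_pow]

lemma circleAverage_pow_mul_re_pow (k : ℕ) {n : ℕ} (hn : n ≠ 0) :
    circleAverage (fun z : ℂ => z ^ k * ((z ^ n).re : ℂ)) 0 1 = if k = n then 1 / 2 else 0 := by
  have integrand_eq : EqOn (fun z : ℂ => z ^ k * ((z ^ n).re : ℂ))
      (fun z => (1 / 2 : ℂ) • (z ^ (k + n : ℤ) + z ^ (k - n : ℤ))) (Metric.sphere 0 |1|) := by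
    intro z hz
    have hz1 : ‖z‖ = 1 := by simpa using hz
    have hz0 : z ≠ 0 := norm_ne_zero_iff.1 (by rw [hz1]; exact one_ne_zero)
    simp only [ofReal_re_pow_of_norm_eq_one hz1, smul_eq_mul, zpow_add₀ hz0, sub_eq_add_neg,
      zpow_natCast]
    ring
  rw [Real.circleAverage_congr_sphere integrand_eq, Real.circleAverage_fun_smul,
    Real.circleAverage_fun_add (circleIntegrable_zpow _) (circleIntegrable_zpow _),
    circleAverage_zpow, circleAverage_zpow, if_neg (by omega), zero_add, smul_eq_mul]
  split_ifs <;> first | omega | simp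

lemma hasSum_neg_re_log_norm_one_sub {w : ℂ} (hw : ‖w‖ < 1) :
    HasSum (fun k : ℕ => -(w ^ k / k).re) (Real.log ‖1 - w‖) := by
  have := (Complex.hasSum_re (Complex.hasSum_taylorSeries_neg_log hw)).neg
  simpa only [Complex.neg_re, Complex.log_re, neg_neg] using this

lemma circleAverage_re_pow_mul_re_pow (q : ℂ) (k : ℕ) {n : ℕ} (hn : n ≠ 0) :
    circleAverage (fun z : ℂ => -((q * z) ^ k / k).re * (z ^ n).re) 0 1 =
      if k = n then -(q ^ n).re / (2 * n) else 0 := by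
  have integrand_eq : (fun z : ℂ => -((q * z) ^ k / k).re * (z ^ n).re) =
      Complex.reCLM ∘ fun z => (-(q ^ k / k)) • (z ^ k * ((z ^ n).re : ℂ)) := by
    ext z
    rw [Function.comp_apply, Complex.reCLM_apply, smul_eq_mul, ← mul_assoc, Complex.re_mul_ofReal,
      mul_pow, ← Complex.neg_re]
    congr 2; ring
  rw [integrand_eq, ContinuousLinearMap.circleAverage_comp_comm _
      (Continuous.continuousOn (by fun_prop)).circleIntegrable',
    Real.circleAverage_fun_smul, circleAverage_pow_mul_re_pow k hn]
  split_ifs with hkn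
  · subst hkn
    rw [show -(q ^ k / (k : ℂ)) • (1 / 2 : ℂ) = -(q ^ k) / ((2 * k : ℝ) : ℂ) by
      push_cast; rw [smul_eq_mul]; field_simp, Complex.reCLM_apply, Complex.div_ofReal_re,
      Complex.neg_re]
  · simp

lemma circleAverage_log_norm_one_sub_mul_re_pow_of_lt {q : ℂ} (hq : ‖q‖ < 1) {n : ℕ}
    (hn : n ≠ 0) :
    circleAverage (fun z => Real.log ‖1 - q * z‖ * (z ^ n).re) 0 1 = -(q ^ n).re / (2 * n) := by
  have norm_eq : ∀ z ∈ Metric.sphere (0 : ℂ) |1|, ‖z‖ = 1 := by simp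
  have termwise := hasSum_circleAverage (c := 0) (R := 1)
    (F := fun k z => -((q * z) ^ k / k).re * (z ^ n).re)
    (f := fun z => Real.log ‖1 - q * z‖ * (z ^ n).re)
    (summable_geometric_of_lt_one (norm_nonneg q) hq)
    (fun k => (Continuous.continuousOn (by fun_prop)).circleIntegrable') ?_ ?_
  · simp only [circleAverage_re_pow_mul_re_pow q _ hn] at termwise
    exact termwise.unique (hasSum_ite_eq n _)
  · intro k z hz
    have numerator_le : ‖(q * z) ^ k / (k : ℂ)‖ ≤ ‖q‖ ^ k := by
      rw [norm_div, norm_pow, norm_mul, norm_eq z hz, mul_one, Complex.norm_natCast]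
      rcases k.eq_zero_or_pos with rfl | hk
      · simp
      · exact div_le_self (by positivity) (by exact_mod_cast hk)
    calc ‖-((q * z) ^ k / k).re * (z ^ n).re‖
        = |((q * z) ^ k / k).re| * |(z ^ n).re| := by rw [Real.norm_eq_abs, abs_mul, abs_neg]
      _ ≤ ‖q‖ ^ k * 1 := by
        gcongr
        · exact (Complex.abs_re_le_norm _).trans numerator_le
        · exact (Complex.abs_re_le_norm _).trans (by rw [norm_pow, norm_eq z hz, one_pow])
      _ = ‖q‖ ^ k := mul_one _
  · intro z hz
    exact (hasSum_neg_re_log_norm_one_sub (by rwa [norm_mul, norm_eq z hz, mul_one])).mul_right _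

lemma abs_log_norm_one_sub_smul_le {w : ℂ} (hw : ‖w‖ ≤ 1) (hw1 : w ≠ 1) {u : ℝ} (hu0 : 0 ≤ u)
    (hu1 : u ≤ 1) : |Real.log ‖1 - u * w‖| ≤ |Real.log ‖1 - w‖| + Real.log 2 := by
  have norm_uw : ‖(u : ℂ) * w‖ = u * ‖w‖ := by
    rw [norm_mul, Complex.norm_real, Real.norm_of_nonneg hu0]
  have norm_uw_le : ‖(u : ℂ) * w‖ ≤ u := norm_uw.trans_le (mul_le_of_le_one_right hu0 hw)
  have dist_le : ‖1 - w‖ ≤ 2 * ‖1 - (u : ℂ) * w‖ := by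
    have one_sub_le : 1 - u ≤ ‖1 - (u : ℂ) * w‖ := by
      have := norm_sub_norm_le (1 : ℂ) (u * w)
      rw [norm_one] at this; linarith
    have norm_sub_le : ‖(u : ℂ) * w - w‖ ≤ 1 - u := by
      rw [← sub_one_mul, norm_mul, norm_sub_rev, ← Complex.ofReal_one, ← Complex.ofReal_sub,
        Complex.norm_real, Real.norm_of_nonneg (sub_nonneg.2 hu1)]
      exact mul_le_of_le_one_right (sub_nonneg.2 hu1) hw
    linarith [norm_sub_le_norm_sub_add_norm_sub 1 ((u : ℂ) * w) w]
  have pos : 0 < ‖1 - w‖ := norm_pos_iff.2 (sub_ne_zero.2 hw1.symm)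
  have pos_u : 0 < ‖1 - (u : ℂ) * w‖ := by linarith
  have log_le : Real.log ‖1 - (u : ℂ) * w‖ ≤ Real.log 2 :=
    Real.log_le_log pos_u ((norm_sub_le _ _).trans (by rw [norm_one]; linarith))
  have le_log : Real.log ‖1 - w‖ ≤ Real.log 2 + Real.log ‖1 - (u : ℂ) * w‖ := by
    rw [← Real.log_mul two_ne_zero pos_u.ne']; exact Real.log_le_log pos dist_le
  rw [abs_le]
  constructor <;> linarith [neg_abs_le (Real.log ‖1 - w‖), abs_nonneg (Real.log ‖1 - w‖)]

lemma ae_circleMap_notMem_of_finite {s : Set ℂ} (hs : s.Finite) :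
    ∀ᵐ θ : ℝ, circleMap 0 1 θ ∉ s := by
  have mem_codiscrete : circleMap 0 1 ⁻¹' sᶜ ∈ codiscrete ℝ :=
    circleMap_preimage_codiscrete one_ne_zero (compl_finite_mem_codiscreteWithin hs)
  rw [← Measure.restrict_univ (μ := (volume : Measure ℝ))]
  exact ae_restrict_le_codiscreteWithin MeasurableSet.univ mem_codiscrete

lemma ae_mul_circleMap_ne_one (q : ℂ) : ∀ᵐ θ : ℝ, q * circleMap 0 1 θ ≠ 1 := by
  filter_upwards [ae_circleMap_notMem_of_finite (finite_singleton q⁻¹)] with θ hθ h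
  exact hθ (eq_inv_of_mul_eq_one_right h)

lemma circleIntegrable_log_norm_one_sub_mul (q : ℂ) :
    CircleIntegrable (fun z => Real.log ‖1 - q * z‖) 0 1 :=
  MeromorphicOn.circleIntegrable_log_norm fun _ _ => by fun_prop

lemma tendsto_circleAverage_log_norm_one_sub_mul_re_pow {q : ℂ} (hq : ‖q‖ ≤ 1) (n : ℕ) :
    Tendsto (fun u : ℝ => circleAverage (fun z => Real.log ‖1 - u * q * z‖ * (z ^ n).re) 0 1)
      (𝓝[<] 1) (𝓝 (circleAverage (fun z => Real.log ‖1 - q * z‖ * (z ^ n).re) 0 1)) := by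
  have norm_mul_le (θ : ℝ) : ‖q * circleMap 0 1 θ‖ ≤ 1 := by simpa using hq
  refine (intervalIntegral.tendsto_integral_filter_of_dominated_convergence
    (fun θ => |Real.log ‖1 - q * circleMap 0 1 θ‖| + Real.log 2) ?_ ?_
    ((circleIntegrable_log_norm_one_sub_mul q).abs.add (circleIntegrable_const _ _ _))
    ?_).const_smul _
  · exact .of_forall fun u => (by fun_prop : Measurable _).aestronglyMeasurable
  · filter_upwards [Ioo_mem_nhdsLT zero_lt_one] with u hu
    filter_upwards [ae_mul_circleMap_ne_one q] with θ hθ _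
    have abs_re_le : |(circleMap 0 1 θ ^ n).re| ≤ 1 :=
      (Complex.abs_re_le_norm _).trans (by simp)
    rw [norm_mul, Real.norm_eq_abs, Real.norm_eq_abs, mul_assoc]
    exact (mul_le_of_le_one_right (abs_nonneg _) abs_re_le).trans
      (abs_log_norm_one_sub_smul_le (norm_mul_le θ) hθ hu.1.le hu.2.le)
  · filter_upwards [ae_mul_circleMap_ne_one q] with θ hθ _
    have continuousAt : ContinuousAt
        (fun u : ℝ => Real.log ‖1 - u * q * circleMap 0 1 θ‖ * (circleMap 0 1 θ ^ n).re) 1 := by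
      refine ContinuousAt.mul (ContinuousAt.log (by fun_prop) ?_) continuousAt_const
      simpa [sub_eq_zero] using hθ.symm
    simpa only [Complex.ofReal_one, one_mul] using
      continuousAt.tendsto.mono_left nhdsWithin_le_nhds

lemma circleAverage_log_norm_one_sub_mul_re_pow {q : ℂ} (hq : ‖q‖ ≤ 1) {n : ℕ} (hn : n ≠ 0) :
    circleAverage (fun z => Real.log ‖1 - q * z‖ * (z ^ n).re) 0 1 = -(q ^ n).re / (2 * n) := by
  refine tendsto_nhds_unique (tendsto_circleAverage_log_norm_one_sub_mul_re_pow hq n) ?_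
  have coeff_tendsto : Tendsto (fun u : ℝ => -(u ^ n * (q ^ n).re) / (2 * n)) (𝓝[<] 1)
      (𝓝 (-(q ^ n).re / (2 * n))) := by
    have : Continuous fun u : ℝ => -(u ^ n * (q ^ n).re) / (2 * n) := by fun_prop
    simpa using this.continuousAt.tendsto.mono_left (nhdsWithin_le_nhds (a := 1) (s := Iio 1))
  refine coeff_tendsto.congr' ?_
  filter_upwards [Ioo_mem_nhdsLT zero_lt_one] with u hu
  have norm_lt : ‖(u : ℂ) * q‖ < 1 := by
    rw [norm_mul, Complex.norm_real, Real.norm_of_nonneg hu.1.le]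
    exact (mul_le_of_le_one_right hu.1.le hq).trans_lt hu.2
  rw [circleAverage_log_norm_one_sub_mul_re_pow_of_lt norm_lt hn, mul_pow, ← Complex.ofReal_pow,
    Complex.re_ofReal_mul]

lemma circleAverage_log_norm_one_sub_mul {q : ℂ} (hq : ‖q‖ ≤ 1) :
    circleAverage (fun z => Real.log ‖1 - q * z‖) 0 1 = 0 := by
  have on_circle : EqOn (fun z => Real.log ‖1 - q * z‖) (fun z => Real.log ‖z⁻¹ - q‖)
      (Metric.sphere 0 |1|) := fun z hz => by
    have hz1 : ‖z‖ = 1 := by simpa using hz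
    have hz0 : z ≠ 0 := norm_ne_zero_iff.1 (by rw [hz1]; exact one_ne_zero)
    simp only
    rw [show 1 - q * z = (z⁻¹ - q) * z by field_simp, norm_mul, hz1, mul_one]
  rw [Real.circleAverage_congr_sphere on_circle,
    Real.circleAverage_zero_one_congr_inv (f := fun z => Real.log ‖z - q‖),
    circleAverage_log_norm_sub_const_of_mem_closedBall (by simpa using hq), Real.log_one]

end CircleAverage

section ArcsineMeasure

variable {a b : ℝ}

/-- The affine image on `[a, b]` of the projection of the unit circle to the real axis; it pushes
the uniform measure forward to the arcsine measure of `[a, b]`. -/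
def circleProj (a b : ℝ) (z : ℂ) : ℝ := (a + b) / 2 + (b - a) / 2 * z.re

@[fun_prop]
lemma continuous_circleProj (a b : ℝ) : Continuous (circleProj a b) := by
  unfold circleProj; fun_prop

lemma integral_arcsineMeasure_eq_integral_cos (hab : a < b) (f : ℝ → ℝ) :
    ∫ x, f x ∂arcsineMeasure a b =
      Real.pi⁻¹ * ∫ θ in (0 : ℝ)..Real.pi, f ((a + b) / 2 + (b - a) / 2 * Real.cos θ) := by
  have hr : 0 < (b - a) / 2 := by linarith
  have hba : b - a ≠ 0 := (sub_pos.2 hab).ne'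
  have density_comp (s : ℝ) :
      1 / (Real.pi * √(((a + b) / 2 + (b - a) / 2 * s - a) * (b - ((a + b) / 2 + (b - a) / 2 * s))))
        = Real.pi⁻¹ * ((b - a) / 2)⁻¹ * √(1 - s ^ 2)⁻¹ := by
    rw [show ((a + b) / 2 + (b - a) / 2 * s - a) * (b - ((a + b) / 2 + (b - a) / 2 * s)) =
        ((b - a) / 2) ^ 2 * (1 - s ^ 2) by ring, Real.sqrt_mul (sq_nonneg _),
      Real.sqrt_sq hr.le, Real.sqrt_inv, one_div, mul_inv, mul_inv, mul_assoc]
  have affine_subst := intervalIntegral.integral_comp_add_mul (a := -1) (b := 1)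
    (fun x => 1 / (Real.pi * √((x - a) * (b - x))) * f x) hr.ne' ((a + b) / 2)
  rw [show (a + b) / 2 + (b - a) / 2 * -1 = a by ring,
    show (a + b) / 2 + (b - a) / 2 * 1 = b by ring, smul_eq_mul] at affine_subst
  calc ∫ x, f x ∂arcsineMeasure a b
      = ∫ x in a..b, 1 / (Real.pi * √((x - a) * (b - x))) * f x := by
        rw [arcsineMeasure, integral_withDensity_eq_integral_toReal_smul (by fun_prop)
            (.of_forall fun _ => ENNReal.ofReal_lt_top),
          intervalIntegral.integral_of_le hab.le, integral_Icc_eq_integral_Ioc]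
        refine integral_congr_ae (.of_forall fun x => ?_)
        simp only [smul_eq_mul]
        rw [ENNReal.toReal_ofReal (by positivity)]
    _ = (b - a) / 2 * ∫ s in (-1 : ℝ)..1, 1 / (Real.pi *
          √(((a + b) / 2 + (b - a) / 2 * s - a) * (b - ((a + b) / 2 + (b - a) / 2 * s)))) *
            f ((a + b) / 2 + (b - a) / 2 * s) := by
        rw [affine_subst, mul_inv_cancel_left₀ hr.ne']
    _ = Real.pi⁻¹ * ∫ s in (-1 : ℝ)..1, f ((a + b) / 2 + (b - a) / 2 * s) * √(1 - s ^ 2)⁻¹ := by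
        simp_rw [density_comp]
        rw [← intervalIntegral.integral_const_mul, ← intervalIntegral.integral_const_mul]
        congr! 2 with s
        field_simp
    _ = _ := by
        rw [← Polynomial.Chebyshev.integral_measureT
            (fun s => f ((a + b) / 2 + (b - a) / 2 * s)),
          Polynomial.Chebyshev.integral_measureT_eq_integral_cos]

lemma isProbabilityMeasure_arcsineMeasure (hab : a < b) :
    IsProbabilityMeasure (arcsineMeasure a b) := by
  have mass := integral_arcsineMeasure_eq_integral_cos hab fun _ => 1
  rw [integral_const, intervalIntegral.integral_const, sub_zero, smul_eq_mul, mul_one, smul_eq_mul,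
    mul_one, inv_mul_cancel₀ Real.pi_ne_zero] at mass
  exact ⟨by rwa [Measure.real, ENNReal.toReal_eq_one_iff] at mass⟩

lemma circleAverage_comp_re_eq_integral_cos {f : ℝ → ℝ} (hf : Continuous f) :
    circleAverage (fun z => f z.re) 0 1 =
      Real.pi⁻¹ * ∫ θ in (0 : ℝ)..Real.pi, f (Real.cos θ) := by
  have re_circleMap (θ : ℝ) : (circleMap 0 1 θ).re = Real.cos θ := by
    simp [circleMap, Complex.exp_ofReal_mul_I_re]
  have reflect : ∫ θ in Real.pi..2 * Real.pi, f (Real.cos θ) =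
      ∫ θ in (0 : ℝ)..Real.pi, f (Real.cos θ) := by
    have := intervalIntegral.integral_comp_sub_left (a := 0) (b := Real.pi)
      (fun θ => f (Real.cos θ)) (2 * Real.pi)
    simp only [Real.cos_two_pi_sub, sub_zero] at this
    rw [this, two_mul, add_sub_cancel_right]
  have interval_integrable (u v : ℝ) : IntervalIntegrable (fun θ => f (Real.cos θ)) volume u v :=
    (by fun_prop : Continuous _).intervalIntegrable u v
  simp only [Real.circleAverage_def, re_circleMap]
  rw [← intervalIntegral.integral_add_adjacent_intervals (interval_integrable 0 Real.pi)
    (interval_integrable _ _), reflect, smul_eq_mul]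
  field_simp
  ring

/-- The rotation-invariant probability measure of the unit circle, parametrized by the angle. -/
def angleMeasure : Measure ℝ :=
  ENNReal.ofReal (2 * Real.pi)⁻¹ • volume.restrict (Ioc 0 (2 * Real.pi))

instance : IsFiniteMeasure angleMeasure :=
  Measure.smul_finite _ ENNReal.ofReal_ne_top

lemma integral_angleMeasure (g : ℂ → ℝ) :
    ∫ θ, g (circleMap 0 1 θ) ∂angleMeasure = circleAverage g 0 1 := by
  rw [angleMeasure, integral_smul_measure, ENNReal.toReal_ofReal (by positivity),
    Real.circleAverage_def, intervalIntegral.integral_of_le (by positivity)]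

lemma arcsineMeasure_eq_map (hab : a < b) :
    arcsineMeasure a b = angleMeasure.map fun θ => circleProj a b (circleMap 0 1 θ) := by
  have := isProbabilityMeasure_arcsineMeasure hab
  refine ext_of_forall_integral_eq_of_IsFiniteMeasure fun f => ?_
  rw [integral_map (by fun_prop) (by fun_prop),
    integral_angleMeasure (fun z => f (circleProj a b z)),
    integral_arcsineMeasure_eq_integral_cos hab]
  exact (circleAverage_comp_re_eq_integral_cos
    (f := fun s => f ((a + b) / 2 + (b - a) / 2 * s)) (by fun_prop)).symm

lemma integral_arcsineMeasure (hab : a < b) {f : ℝ → ℝ} (hf : Measurable f) :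
    ∫ x, f x ∂arcsineMeasure a b = circleAverage (fun z => f (circleProj a b z)) 0 1 := by
  rw [arcsineMeasure_eq_map hab, integral_map (by fun_prop) hf.aestronglyMeasurable,
    integral_angleMeasure (fun z => f (circleProj a b z))]

lemma integrable_arcsineMeasure (hab : a < b) {f : ℝ → ℝ} (hf : Measurable f)
    (hfc : CircleIntegrable (fun z => f (circleProj a b z)) 0 1) :
    Integrable f (arcsineMeasure a b) := by
  rw [arcsineMeasure_eq_map hab, integrable_map_measure hf.aestronglyMeasurable (by fun_prop)]
  refine Integrable.smul_measure ?_ ENNReal.ofReal_ne_top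
  exact (intervalIntegrable_iff_integrableOn_Ioc_of_le (by positivity)).1 hfc

lemma ae_arcsineMeasure_mem_Icc (a b : ℝ) : ∀ᵐ x ∂arcsineMeasure a b, x ∈ Icc a b :=
  (withDensity_absolutelyContinuous _ _).ae_le (ae_restrict_mem measurableSet_Icc)

end ArcsineMeasure

section LogMoments

variable {a b t : ℝ}

/-- The Joukowski map of the complement of the interval `[a, b]`: it maps both the punctured unit
disc and the exterior of the unit disc onto the complement of `[a, b]`, and agrees with
`circleProj a b` on the unit circle. -/
def joukowski (a b : ℝ) (q : ℂ) : ℂ := (a + b) / 2 + (b - a) / 4 * (q + q⁻¹)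

lemma ofReal_circleProj (a b : ℝ) {z : ℂ} (hz : ‖z‖ = 1) :
    (circleProj a b z : ℂ) = joukowski a b z := by
  have : (z.re : ℂ) = (z + z⁻¹) / 2 := by
    simpa using ofReal_re_pow_of_norm_eq_one hz 1
  rw [circleProj, joukowski]
  push_cast
  rw [this]
  ring

lemma norm_joukowski_sub (hab : a < b) {z q : ℂ} (hz : ‖z‖ = 1) (hq : q ≠ 0) :
    ‖joukowski a b z - joukowski a b q‖ =
      (b - a) / (4 * ‖q‖) * (‖1 - q * z‖ * ‖1 - starRingEnd ℂ q * z‖) := by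
  have hz0 : z ≠ 0 := norm_ne_zero_iff.1 (by rw [hz]; exact one_ne_zero)
  have factor : joukowski a b z - joukowski a b q =
      -(((b - a : ℝ) : ℂ) / (4 * q)) * ((1 - q * z) * (1 - q * z⁻¹)) := by
    rw [joukowski, joukowski]; push_cast; field_simp; ring
  have norm_conj : ‖1 - q * z⁻¹‖ = ‖1 - starRingEnd ℂ q * z‖ := by
    rw [← Complex.norm_conj, map_sub, map_one, map_mul, Complex.inv_eq_conj hz, Complex.conj_conj]
  rw [factor, norm_mul, norm_mul, norm_neg, norm_div, norm_conj, norm_mul, Complex.norm_real,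
    Real.norm_of_nonneg (sub_nonneg.2 hab.le), Complex.norm_ofNat]

lemma log_norm_joukowski_sub_eventuallyEq (hab : a < b) {q : ℂ} (hq : q ≠ 0) :
    (fun z => Real.log ‖joukowski a b z - joukowski a b q‖)
      =ᶠ[codiscreteWithin (Metric.sphere (0 : ℂ) |1|)] fun z =>
        Real.log ((b - a) / (4 * ‖q‖)) +
          (Real.log ‖1 - q * z‖ + Real.log ‖1 - starRingEnd ℂ q * z‖) := by
  have off_zeros := compl_finite_mem_codiscreteWithin (s := Metric.sphere (0 : ℂ) |1|)
    (toFinite {q⁻¹, (starRingEnd ℂ q)⁻¹})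
  filter_upwards [off_zeros, self_mem_codiscreteWithin _] with z hz hz1
  have norm_ne_zero {p : ℂ} (hzp : z ≠ p⁻¹) : ‖1 - p * z‖ ≠ 0 := by
    rw [norm_ne_zero_iff, sub_ne_zero]
    exact fun h => hzp (eq_inv_of_mul_eq_one_right h.symm)
  have hzq : z ≠ q⁻¹ := fun h => hz (.inl h)
  have hzq' : z ≠ (starRingEnd ℂ q)⁻¹ := fun h => hz (.inr h)
  have scale_ne_zero : (b - a) / (4 * ‖q‖) ≠ 0 :=
    (div_pos (sub_pos.2 hab) (by positivity)).ne'
  rw [norm_joukowski_sub hab (by simpa using hz1) hq, Real.log_mul scale_ne_zero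
      (mul_ne_zero (norm_ne_zero hzq) (norm_ne_zero hzq')),
    Real.log_mul (norm_ne_zero hzq) (norm_ne_zero hzq')]

lemma circleAverage_re_pow {n : ℕ} (hn : n ≠ 0) :
    circleAverage (fun z : ℂ => (z ^ n).re) 0 1 = 0 := by
  have pow_average : circleAverage (fun z : ℂ => z ^ n) 0 1 = 0 := by
    simpa [hn] using circleAverage_zpow n
  have re_comm := ContinuousLinearMap.circleAverage_comp_comm Complex.reCLM
    (f := fun z : ℂ => z ^ n) (c := 0) (R := 1)
    (Continuous.continuousOn (by fun_prop)).circleIntegrable'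
  rwa [pow_average, map_zero] at re_comm

lemma circleIntegrable_mul_re_pow {f : ℂ → ℝ} (hf : CircleIntegrable f 0 1) (n : ℕ) :
    CircleIntegrable (fun z => f z * (z ^ n).re) 0 1 :=
  IntervalIntegrable.mul_continuousOn hf (Continuous.continuousOn (by fun_prop))

lemma circleAverage_log_norm_joukowski_sub (hab : a < b) {q : ℂ} (hq : q ≠ 0) (hq1 : ‖q‖ ≤ 1) :
    circleAverage (fun z => Real.log ‖joukowski a b z - joukowski a b q‖) 0 1 =
      Real.log ((b - a) / (4 * ‖q‖)) := by
  have hq1' : ‖starRingEnd ℂ q‖ ≤ 1 := by rwa [Complex.norm_conj]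
  have log_integrable := circleIntegrable_log_norm_one_sub_mul
  rw [Real.circleAverage_congr_codiscreteWithin (log_norm_joukowski_sub_eventuallyEq hab hq)
      one_ne_zero, Real.circleAverage_fun_add (circleIntegrable_const _ _ _)
      ((log_integrable q).fun_add (log_integrable _)),
    Real.circleAverage_fun_add (log_integrable q) (log_integrable _), Real.circleAverage_const,
    circleAverage_log_norm_one_sub_mul hq1, circleAverage_log_norm_one_sub_mul hq1', add_zero,
    add_zero]

lemma circleAverage_log_norm_joukowski_sub_mul_re_pow (hab : a < b) {q : ℂ} (hq : q ≠ 0)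
    (hq1 : ‖q‖ ≤ 1) {n : ℕ} (hn : n ≠ 0) :
    circleAverage (fun z => Real.log ‖joukowski a b z - joukowski a b q‖ * (z ^ n).re) 0 1 =
      -(q ^ n).re / n := by
  have hq1' : ‖starRingEnd ℂ q‖ ≤ 1 := by rwa [Complex.norm_conj]
  have log_integrable (p : ℂ) :=
    circleIntegrable_mul_re_pow (circleIntegrable_log_norm_one_sub_mul p) n
  have expand := (log_norm_joukowski_sub_eventuallyEq hab hq).mul
    (EventuallyEq.refl _ fun z : ℂ => (z ^ n).re)
  simp only [Pi.mul_def, add_mul] at expand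
  rw [Real.circleAverage_congr_codiscreteWithin expand one_ne_zero,
    Real.circleAverage_fun_add (circleIntegrable_mul_re_pow (circleIntegrable_const _ _ _) n)
      ((log_integrable q).fun_add (log_integrable _)),
    Real.circleAverage_fun_add (log_integrable q) (log_integrable _),
    circleAverage_log_norm_one_sub_mul_re_pow hq1 hn,
    circleAverage_log_norm_one_sub_mul_re_pow hq1' hn]
  have const_term :
      circleAverage (fun z => Real.log ((b - a) / (4 * ‖q‖)) * (z ^ n).re) 0 1 = 0 := by
    simpa only [smul_eq_mul, circleAverage_re_pow hn, mul_zero] using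
      Real.circleAverage_fun_smul (a := Real.log ((b - a) / (4 * ‖q‖)))
        (f := fun z : ℂ => (z ^ n).re) (c := 0) (R := 1)
  rw [const_term, ← map_pow, Complex.conj_re]
  ring

/-- The `n`-th Chebyshev polynomial of the interval `[a, b]`, that is, of the first kind and
precomposed with the affine map of `[a, b]` onto `[-1, 1]`. -/
def chebyshevIcc (a b : ℝ) (n : ℕ) : ℝ[X] :=
  (Polynomial.Chebyshev.T ℝ n).comp (C (2 / (b - a)) * X + C (-(a + b) / (b - a)))

lemma eval_chebyshevIcc_circleProj (hab : a < b) {z : ℂ} (hz : ‖z‖ = 1) (n : ℕ) :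
    (chebyshevIcc a b n).eval (circleProj a b z) = (z ^ n).re := by
  have hba : b - a ≠ 0 := (sub_pos.2 hab).ne'
  have arg_eq : z = Complex.exp (z.arg * Complex.I) := by
    simpa [hz] using (Complex.norm_mul_exp_arg_mul_I z).symm
  have re_eq : z.re = Real.cos z.arg := by
    conv_lhs => rw [arg_eq, Complex.exp_ofReal_mul_I_re]
  have pow_eq : (z ^ n).re = Real.cos (n * z.arg) := by
    conv_lhs => rw [arg_eq, ← Complex.exp_nat_mul, ← mul_assoc, ← Complex.ofReal_natCast,
      ← Complex.ofReal_mul, Complex.exp_ofReal_mul_I_re]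
  have rescale : 2 / (b - a) * circleProj a b z + -(a + b) / (b - a) = Real.cos z.arg := by
    rw [circleProj, re_eq]; field_simp; ring
  rw [chebyshevIcc, eval_comp, eval_add, eval_mul, eval_C, eval_X, eval_C, rescale, pow_eq,
    Polynomial.Chebyshev.T_real_cos, Int.cast_natCast]

lemma integral_mul_chebyshevIcc_arcsineMeasure (hab : a < b) {f : ℝ → ℝ} (hf : Measurable f)
    (n : ℕ) : ∫ x, f x * (chebyshevIcc a b n).eval x ∂arcsineMeasure a b =
      circleAverage (fun z => f (circleProj a b z) * (z ^ n).re) 0 1 := by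
  rw [integral_arcsineMeasure hab (f := fun x => f x * (chebyshevIcc a b n).eval x)
    (hf.mul (Polynomial.continuous _).measurable)]
  refine Real.circleAverage_congr_sphere fun z hz => ?_
  simp only [eval_chebyshevIcc_circleProj hab (show ‖z‖ = 1 by simpa using hz)]

lemma abs_circleProj_sub {q z : ℂ} (hq : joukowski a b q = t) (hz : ‖z‖ = 1) :
    |circleProj a b z - t| = ‖joukowski a b z - joukowski a b q‖ := by
  rw [hq, ← ofReal_circleProj a b hz, ← Complex.ofReal_sub, Complex.norm_real, Real.norm_eq_abs]

lemma integrable_log_abs_sub_arcsineMeasure (hab : a < b) (t : ℝ) :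
    Integrable (fun x => Real.log |x - t|) (arcsineMeasure a b) := by
  refine integrable_arcsineMeasure hab (by fun_prop) ?_
  have meromorphic : MeromorphicOn (fun z => joukowski a b z - t) (Metric.sphere 0 |1|) :=
    fun z _ => by unfold joukowski; fun_prop
  refine meromorphic.circleIntegrable_log_norm.congr_codiscreteWithin ?_
  filter_upwards [self_mem_codiscreteWithin _] with z hz
  rw [← ofReal_circleProj a b (by simpa using hz), ← Complex.ofReal_sub, Complex.norm_real,
    Real.norm_eq_abs]

lemma integral_log_abs_sub_arcsineMeasure (hab : a < b) {q : ℂ} (hq : q ≠ 0) (hq1 : ‖q‖ ≤ 1)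
    (ht : joukowski a b q = t) :
    ∫ x, Real.log |x - t| ∂arcsineMeasure a b = Real.log ((b - a) / (4 * ‖q‖)) := by
  rw [integral_arcsineMeasure hab (by fun_prop), ← circleAverage_log_norm_joukowski_sub hab hq hq1]
  exact Real.circleAverage_congr_sphere fun z hz => by
    simp only [abs_circleProj_sub ht (show ‖z‖ = 1 by simpa using hz)]

lemma integral_log_abs_sub_mul_chebyshevIcc (hab : a < b) {q : ℂ} (hq : q ≠ 0) (hq1 : ‖q‖ ≤ 1)
    (ht : joukowski a b q = t) {n : ℕ} (hn : n ≠ 0) :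
    ∫ x, Real.log |x - t| * (chebyshevIcc a b n).eval x ∂arcsineMeasure a b =
      -(q ^ n).re / n := by
  rw [integral_mul_chebyshevIcc_arcsineMeasure hab (by fun_prop),
    ← circleAverage_log_norm_joukowski_sub_mul_re_pow hab hq hq1 hn]
  exact Real.circleAverage_congr_sphere fun z hz => by
    simp only [abs_circleProj_sub ht (show ‖z‖ = 1 by simpa using hz)]

end LogMoments

section BalayageKernel

variable {a b t : ℝ}

lemma exists_joukowski_eq (hab : a < b) (z : ℂ) :
    ∃ q : ℂ, q ≠ 0 ∧ ‖q‖ ≤ 1 ∧ joukowski a b q = z := by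
  have hba : (b : ℂ) - a ≠ 0 := by exact_mod_cast (sub_pos.2 hab).ne'
  have joukowski_eq {q : ℂ} (hq : q ≠ 0)
      (root : q * q - 2 * ((2 * z - a - b) / (b - a)) * q + 1 = 0) : joukowski a b q = z := by
    have sum_inv : q + q⁻¹ = 2 * ((2 * z - a - b) / (b - a)) := by
      field_simp at root ⊢; linear_combination root
    rw [joukowski, sum_inv]; field_simp; ring
  obtain ⟨q, root⟩ : ∃ q : ℂ, q * q - 2 * ((2 * z - a - b) / (b - a)) * q + 1 = 0 := by
    obtain ⟨s, hs⟩ := IsAlgClosed.exists_pow_nat_eq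
      (((2 * z - a - b) / (b - a)) ^ 2 - 1) two_pos
    exact ⟨(2 * z - a - b) / (b - a) + s, by linear_combination hs⟩
  have hq : q ≠ 0 := by rintro rfl; simp at root
  rcases le_total ‖q‖ 1 with hq1 | hq1
  · exact ⟨q, hq, hq1, joukowski_eq hq root⟩
  · refine ⟨q⁻¹, inv_ne_zero hq, ?_, ?_⟩
    · rw [norm_inv]; exact inv_le_one_of_one_le₀ hq1
    · rw [← joukowski_eq hq root, joukowski, joukowski, inv_inv, add_comm q⁻¹]

lemma im_eq_zero_of_joukowski_eq_ofReal (hab : a < b) {q : ℂ} (hq : q ≠ 0) (hq1 : ‖q‖ < 1)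
    (ht : joukowski a b q = t) : q.im = 0 := by
  have hba : (b : ℝ) - a ≠ 0 := (sub_pos.2 hab).ne'
  have normSq_lt : Complex.normSq q < 1 := by
    rw [Complex.normSq_eq_norm_sq]; exact pow_lt_one₀ (norm_nonneg _) hq1 two_ne_zero
  have normSq_pos := Complex.normSq_pos.2 hq
  have sum_inv : q + q⁻¹ = (((2 * t - a - b) * 2 / (b - a) : ℝ) : ℂ) := by
    have : (b : ℂ) - a ≠ 0 := by exact_mod_cast hba
    rw [joukowski] at ht
    push_cast
    rw [← ht]; field_simp; ring
  have im_sum := congrArg Complex.im sum_inv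
  rw [Complex.add_im, Complex.inv_im, Complex.ofReal_im] at im_sum
  have : q.im * (Complex.normSq q - 1) = 0 := by
    field_simp at im_sum; linear_combination im_sum
  exact (mul_eq_zero.1 this).resolve_right (by linarith)

lemma sub_mul_sub_of_joukowski_eq {q : ℝ} (hq : q ≠ 0) (ht : joukowski a b q = t) :
    (t - a) * (t - b) = ((b - a) / (4 * q) * (1 - q ^ 2)) ^ 2 := by
  have ht' : t = (a + b) / 2 + (b - a) / 4 * (q + q⁻¹) := by
    rw [joukowski] at ht; exact_mod_cast ht.symm
  rw [ht']; field_simp; ring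

lemma circleProj_mem_Icc (hab : a < b) {z : ℂ} (hz : ‖z‖ = 1) : circleProj a b z ∈ Icc a b := by
  obtain ⟨lower, upper⟩ := abs_le.1 (hz ▸ Complex.abs_re_le_norm z)
  constructor <;> rw [circleProj] <;> nlinarith

lemma exists_circleProj_eq (hab : a < b) (ht : t ∈ Icc a b) :
    ∃ z : ℂ, ‖z‖ = 1 ∧ circleProj a b z = t := by
  obtain ⟨q, hq, hq1, hqt⟩ := exists_joukowski_eq hab t
  rcases hq1.eq_or_lt with hq1 | hq1
  · exact ⟨q, hq1, by exact_mod_cast (ofReal_circleProj a b hq1).trans hqt⟩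
  · obtain ⟨q, rfl⟩ : ∃ r : ℝ, (r : ℂ) = q :=
      ⟨q.re, Complex.ext rfl (im_eq_zero_of_joukowski_eq_ofReal hab hq hq1 hqt).symm⟩
    rw [Complex.norm_real, Real.norm_eq_abs] at hq1
    have hq0 : q ≠ 0 := by exact_mod_cast hq
    have : 0 < (t - a) * (t - b) := by
      rw [sub_mul_sub_of_joukowski_eq hq0 hqt]
      have := (sq_lt_one_iff_abs_lt_one q).2 hq1
      have := sub_pos.2 hab
      have : 1 - q ^ 2 ≠ 0 := by linarith
      positivity
    nlinarith [ht.1, ht.2]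

lemma exists_real_joukowski_eq (hab : a < b) (ht : t ∉ Icc a b) :
    ∃ q : ℝ, q ≠ 0 ∧ |q| < 1 ∧ joukowski a b q = t := by
  obtain ⟨q, hq, hq1, hqt⟩ := exists_joukowski_eq hab t
  have hq1 : ‖q‖ < 1 := hq1.lt_of_ne fun hq1 => ht <| by
    have : circleProj a b q = t := by exact_mod_cast (ofReal_circleProj a b hq1).trans hqt
    exact this ▸ circleProj_mem_Icc hab hq1
  obtain ⟨q, rfl⟩ : ∃ r : ℝ, (r : ℂ) = q :=
    ⟨q.re, Complex.ext rfl (im_eq_zero_of_joukowski_eq_ofReal hab hq hq1 hqt).symm⟩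
  exact ⟨q, by exact_mod_cast hq, by simpa using hq1, hqt⟩

/-- The density with respect to `arcsineMeasure a b` of the balayage onto `[a, b]` of a unit point
mass at `t ∉ [a, b]`. -/
def balayageKernel (a b t x : ℝ) : ℝ := wAbs a b t / |t - x|

@[fun_prop]
lemma measurable_balayageKernel (a b : ℝ) :
    Measurable fun p : ℝ × ℝ => balayageKernel a b p.1 p.2 := by
  unfold balayageKernel wAbs; fun_prop

lemma balayageKernel_circleProj (hab : a < b) {q : ℝ} (hq : q ≠ 0) (hq1 : |q| < 1)
    (ht : joukowski a b q = t) {z : ℂ} (hz : ‖z‖ = 1) :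
    balayageKernel a b t (circleProj a b z) = poissonKernel 0 q z := by
  have hba := sub_pos.2 hab
  have hq2 := (sq_lt_one_iff_abs_lt_one q).2 hq1
  have norm_reflect : ‖1 - q * z‖ = ‖z - q‖ := by
    have hz0 : z * starRingEnd ℂ z = 1 := by simp [Complex.mul_conj, Complex.normSq_eq_norm_sq, hz]
    rw [← Complex.norm_conj (1 - q * z), ← one_mul ‖starRingEnd ℂ _‖, ← hz, ← norm_mul, map_sub,
      map_one, map_mul, Complex.conj_ofReal, mul_sub, mul_left_comm, hz0, mul_one, mul_one]
  have weight : wAbs a b t = (b - a) / (4 * |q|) * (1 - q ^ 2) := by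
    rw [wAbs, sub_mul_sub_of_joukowski_eq hq ht, abs_sq, Real.sqrt_sq_eq_abs, abs_mul, abs_div,
      abs_mul, abs_of_pos hba, abs_of_pos (by linarith : 0 < 1 - q ^ 2), abs_of_pos four_pos]
  have distance : |t - circleProj a b z| = (b - a) / (4 * |q|) * ‖z - q‖ ^ 2 := by
    rw [abs_sub_comm, abs_circleProj_sub ht hz,
      norm_joukowski_sub hab hz (Complex.ofReal_ne_zero.2 hq), Complex.conj_ofReal,
      Complex.norm_real, Real.norm_eq_abs, norm_reflect, sq]
  rw [balayageKernel, weight, distance, poissonKernel_def,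
    mul_div_mul_left _ _ (by positivity), sub_zero, sub_zero, hz, Complex.norm_real,
    Real.norm_eq_abs, sq_abs, one_pow]

lemma integral_balayageKernel_mul_chebyshevIcc (hab : a < b) {q : ℝ} (hq : q ≠ 0) (hq1 : |q| < 1)
    (ht : joukowski a b q = t) (n : ℕ) :
    ∫ x, balayageKernel a b t x * (chebyshevIcc a b n).eval x ∂arcsineMeasure a b = q ^ n := by
  have poisson := InnerProductSpace.HarmonicOnNhd.circleAverage_poissonKernel_smul
    (f := fun z : ℂ => (z ^ n).re) (c := 0) (R := 1) (w := q)
    (fun z _ => (show AnalyticAt ℂ (fun z : ℂ => z ^ n) z by fun_prop).harmonicAt_re)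
    (by simpa using hq1)
  rw [integral_mul_chebyshevIcc_arcsineMeasure hab (by fun_prop)]
  refine (Real.circleAverage_congr_sphere fun z hz => ?_).trans
    (poisson.trans (by rw [← Complex.ofReal_pow, Complex.ofReal_re]))
  simp only [Pi.smul_apply', smul_eq_mul,
    balayageKernel_circleProj hab hq hq1 ht (show ‖z‖ = 1 by simpa using hz)]

lemma integral_balayageKernel (hab : a < b) (ht : t ∉ Icc a b) :
    ∫ x, balayageKernel a b t x ∂arcsineMeasure a b = 1 := by
  obtain ⟨q, hq, hq1, hqt⟩ := exists_real_joukowski_eq hab ht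
  simpa [chebyshevIcc] using integral_balayageKernel_mul_chebyshevIcc hab hq hq1 hqt 0

lemma integral_log_abs_sub_mul_chebyshevIcc_of_mem (hab : a < b) (ht : t ∈ Icc a b) {n : ℕ}
    (hn : n ≠ 0) :
    ∫ x, Real.log |x - t| * (chebyshevIcc a b n).eval x ∂arcsineMeasure a b =
      -(chebyshevIcc a b n).eval t / n := by
  obtain ⟨z, hz, rfl⟩ := exists_circleProj_eq hab ht
  rw [integral_log_abs_sub_mul_chebyshevIcc hab (norm_ne_zero_iff.1 (by simp [hz])) hz.le
    (ofReal_circleProj a b hz).symm hn, eval_chebyshevIcc_circleProj hab hz]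

lemma integral_log_abs_sub_mul_chebyshevIcc_of_notMem (hab : a < b) (ht : t ∉ Icc a b) {n : ℕ}
    (hn : n ≠ 0) :
    ∫ x, Real.log |x - t| * (chebyshevIcc a b n).eval x ∂arcsineMeasure a b =
      -(∫ x, balayageKernel a b t x * (chebyshevIcc a b n).eval x ∂arcsineMeasure a b) / n := by
  obtain ⟨q, hq, hq1, hqt⟩ := exists_real_joukowski_eq hab ht
  rw [integral_log_abs_sub_mul_chebyshevIcc hab (Complex.ofReal_ne_zero.2 hq)
    (by simpa using hq1.le) hqt hn, integral_balayageKernel_mul_chebyshevIcc hab hq hq1 hqt,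
    ← Complex.ofReal_pow, Complex.ofReal_re]

end BalayageKernel

section Balayage

variable {a b : ℝ} {ν σ : Measure ℝ} [IsFiniteMeasure ν] [IsFiniteMeasure σ] {S : Set ℝ}

lemma log_div_four_le_integral_log_abs_sub (hab : a < b) (t : ℝ) :
    Real.log ((b - a) / 4) ≤ ∫ x, Real.log |x - t| ∂arcsineMeasure a b := by
  obtain ⟨q, hq, hq1, hqt⟩ := exists_joukowski_eq hab t
  rw [integral_log_abs_sub_arcsineMeasure hab hq hq1 hqt]
  have := sub_pos.2 hab
  have := norm_pos_iff.2 hq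
  gcongr
  linarith

lemma abs_log_le_two_mul_log_sub_log {y C : ℝ} (hy : 0 ≤ y) (hyC : y ≤ C) (hC : 1 ≤ C) :
    |Real.log y| ≤ 2 * Real.log C - Real.log y := by
  have log_nonneg := Real.log_nonneg hC
  rcases hy.eq_or_lt with rfl | hy
  · simpa
  · have := Real.log_le_log hy hyC
    rw [abs_le]
    constructor <;> linarith

lemma exists_integral_abs_log_abs_sub_le (hab : a < b) (hS : Bornology.IsBounded S) :
    ∃ M, ∀ t ∈ S, ∫ x, |Real.log (|x - t|)| ∂arcsineMeasure a b ≤ M := by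
  have := isProbabilityMeasure_arcsineMeasure hab
  obtain ⟨C, hC⟩ := Metric.isBounded_iff.1 ((Metric.isBounded_Icc a b).union hS)
  refine ⟨2 * Real.log (max C 1) - Real.log ((b - a) / 4), fun t ht => ?_⟩
  have log_integrable := integrable_log_abs_sub_arcsineMeasure hab t
  calc ∫ x, |Real.log (|x - t|)| ∂arcsineMeasure a b
      ≤ ∫ x, (2 * Real.log (max C 1) - Real.log |x - t|) ∂arcsineMeasure a b := by
        refine integral_mono_ae log_integrable.abs ((integrable_const _).sub log_integrable) ?_
        filter_upwards [ae_arcsineMeasure_mem_Icc a b] with x hx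
        exact abs_log_le_two_mul_log_sub_log (abs_nonneg _)
          ((hC (Or.inl hx) (Or.inr ht)).trans (le_max_left _ _)) (le_max_right _ _)
    _ = 2 * Real.log (max C 1) - ∫ x, Real.log |x - t| ∂arcsineMeasure a b := by
        rw [integral_sub (integrable_const _) log_integrable, integral_const, probReal_univ,
          one_smul]
    _ ≤ _ := by gcongr; exact log_div_four_le_integral_log_abs_sub hab t

lemma integrable_log_abs_sub_prod (hab : a < b) (hS : Bornology.IsBounded S)
    (hν : ∀ᵐ t ∂ν, t ∈ S) :
    Integrable (fun p : ℝ × ℝ => Real.log |p.1 - p.2|) ((arcsineMeasure a b).prod ν) := by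
  have := isProbabilityMeasure_arcsineMeasure hab
  obtain ⟨M, hM⟩ := exists_integral_abs_log_abs_sub_le hab hS
  have measurable_kernel : Measurable fun p : ℝ × ℝ => Real.log |p.1 - p.2| := by fun_prop
  refine (integrable_prod_iff' measurable_kernel.aestronglyMeasurable).2
    ⟨.of_forall (integrable_log_abs_sub_arcsineMeasure hab), ?_⟩
  refine Integrable.of_bound
    measurable_kernel.norm.stronglyMeasurable.integral_prod_left'.aestronglyMeasurable M ?_
  filter_upwards [hν] with t ht
  rw [Real.norm_of_nonneg (integral_nonneg fun _ => norm_nonneg _)]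
  exact hM t ht

/-- The density with respect to `arcsineMeasure a b` of the balayage of `σ` onto `[a, b]`. -/
def balayage (a b : ℝ) (σ : Measure ℝ) (x : ℝ) : ℝ := ∫ t, balayageKernel a b t x ∂σ

lemma integrable_balayageKernel (hab : a < b) {t : ℝ} (ht : t ∉ Icc a b) :
    Integrable (balayageKernel a b t) (arcsineMeasure a b) :=
  .of_integral_ne_zero (by rw [integral_balayageKernel hab ht]; exact one_ne_zero)

lemma balayageKernel_nonneg (a b t x : ℝ) : 0 ≤ balayageKernel a b t x :=
  div_nonneg (Real.sqrt_nonneg _) (abs_nonneg _)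

lemma integrable_balayageKernel_prod (hab : a < b) (hσ : ∀ᵐ t ∂σ, t ∉ Icc a b) :
    Integrable (fun p : ℝ × ℝ => balayageKernel a b p.2 p.1) ((arcsineMeasure a b).prod σ) := by
  have := isProbabilityMeasure_arcsineMeasure hab
  have measurable_kernel : Measurable fun p : ℝ × ℝ => balayageKernel a b p.2 p.1 :=
    (measurable_balayageKernel a b).comp measurable_swap
  refine (integrable_prod_iff' measurable_kernel.aestronglyMeasurable).2
    ⟨hσ.mono fun t ht => integrable_balayageKernel hab ht, (integrable_const (1 : ℝ)).congr ?_⟩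
  filter_upwards [hσ] with t ht
  simp only [Real.norm_of_nonneg (balayageKernel_nonneg _ _ _ _), integral_balayageKernel hab ht]

lemma integrable_balayage (hab : a < b) (hσ : ∀ᵐ t ∂σ, t ∉ Icc a b) :
    Integrable (balayage a b σ) (arcsineMeasure a b) :=
  have := isProbabilityMeasure_arcsineMeasure hab
  (integrable_balayageKernel_prod hab hσ).integral_prod_left

lemma exists_ae_norm_le_arcsineMeasure {f : ℝ → ℝ} (hf : Continuous f) :
    ∃ M, ∀ᵐ x ∂arcsineMeasure a b, ‖f x‖ ≤ M :=
  (isCompact_Icc.exists_bound_of_continuousOn hf.continuousOn).imp fun _ hM =>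
    (ae_arcsineMeasure_mem_Icc a b).mono hM

lemma integral_integral_mul_swap_arcsineMeasure (hab : a < b) {k : ℝ × ℝ → ℝ}
    (hk : Integrable k ((arcsineMeasure a b).prod ν)) {f : ℝ → ℝ} (hf : Continuous f) :
    ∫ x, (∫ t, k (x, t) ∂ν) * f x ∂arcsineMeasure a b =
      ∫ t, (∫ x, k (x, t) * f x ∂arcsineMeasure a b) ∂ν := by
  have := isProbabilityMeasure_arcsineMeasure hab
  obtain ⟨M, hM⟩ := exists_ae_norm_le_arcsineMeasure (a := a) (b := b) hf
  have mul_integrable : Integrable (fun p : ℝ × ℝ => k p * f p.1)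
      ((arcsineMeasure a b).prod ν) :=
    hk.mul_bdd (hf.comp continuous_fst).aestronglyMeasurable
      (Measure.quasiMeasurePreserving_fst.ae hM)
  simp only [← integral_mul_const]
  exact integral_integral_swap mul_integrable

lemma integral_balayage_mul (hab : a < b) (hσ : ∀ᵐ t ∂σ, t ∉ Icc a b) {f : ℝ → ℝ}
    (hf : Continuous f) :
    ∫ x, balayage a b σ x * f x ∂arcsineMeasure a b =
      ∫ t, (∫ x, balayageKernel a b t x * f x ∂arcsineMeasure a b) ∂σ :=
  integral_integral_mul_swap_arcsineMeasure hab (integrable_balayageKernel_prod hab hσ) hf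

lemma integral_balayage (hab : a < b) (hσ : ∀ᵐ t ∂σ, t ∉ Icc a b) :
    ∫ x, balayage a b σ x ∂arcsineMeasure a b = σ.real univ := by
  have total := integral_balayage_mul hab hσ (f := fun _ => 1) continuous_const
  simp only [mul_one] at total
  rw [total, integral_congr_ae (hσ.mono fun t ht => integral_balayageKernel hab ht),
    integral_const, smul_eq_mul, mul_one]

lemma integrable_logPot (hab : a < b) (hS : Bornology.IsBounded S) (hν : ∀ᵐ t ∂ν, t ∈ S) :
    Integrable (logPot ν) (arcsineMeasure a b) :=
  have := isProbabilityMeasure_arcsineMeasure hab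
  (integrable_log_abs_sub_prod hab hS hν).integral_prod_left.neg

lemma integral_logPot_mul (hab : a < b) (hS : Bornology.IsBounded S) (hν : ∀ᵐ t ∂ν, t ∈ S)
    {f : ℝ → ℝ} (hf : Continuous f) :
    ∫ x, logPot ν x * f x ∂arcsineMeasure a b =
      -∫ t, (∫ x, Real.log |x - t| * f x ∂arcsineMeasure a b) ∂ν := by
  rw [← integral_integral_mul_swap_arcsineMeasure hab (integrable_log_abs_sub_prod hab hS hν) hf,
    ← integral_neg]
  simp only [logPot, neg_mul]

lemma integral_logPot_mul_chebyshevIcc_of_mem (hab : a < b) (hν : ∀ᵐ t ∂ν, t ∈ Icc a b) {n : ℕ}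
    (hn : n ≠ 0) :
    ∫ x, logPot ν x * (chebyshevIcc a b n).eval x ∂arcsineMeasure a b =
      (∫ t, (chebyshevIcc a b n).eval t ∂ν) / n := by
  rw [integral_logPot_mul hab (Metric.isBounded_Icc a b) hν (Polynomial.continuous _),
    integral_congr_ae (hν.mono fun t ht => integral_log_abs_sub_mul_chebyshevIcc_of_mem hab ht hn),
    integral_div, integral_neg, neg_div, neg_neg]

lemma integral_logPot_mul_chebyshevIcc_of_notMem (hab : a < b) (hS : Bornology.IsBounded S)
    (hσS : ∀ᵐ t ∂σ, t ∈ S) (hσ : ∀ᵐ t ∂σ, t ∉ Icc a b) {n : ℕ} (hn : n ≠ 0) :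
    ∫ x, logPot σ x * (chebyshevIcc a b n).eval x ∂arcsineMeasure a b =
      (∫ x, balayage a b σ x * (chebyshevIcc a b n).eval x ∂arcsineMeasure a b) / n := by
  rw [integral_logPot_mul hab hS hσS (Polynomial.continuous _),
    integral_balayage_mul hab hσ (Polynomial.continuous _),
    integral_congr_ae (hσ.mono fun t ht =>
      integral_log_abs_sub_mul_chebyshevIcc_of_notMem hab ht hn),
    integral_div, integral_neg, neg_div, neg_neg]

lemma integral_chebyshevIcc (hab : a < b) {n : ℕ} (hn : n ≠ 0) :
    ∫ x, (chebyshevIcc a b n).eval x ∂arcsineMeasure a b = 0 := by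
  simpa [circleAverage_re_pow hn] using
    integral_mul_chebyshevIcc_arcsineMeasure hab (f := fun _ => 1) measurable_const n

end Balayage

section ChebyshevMoments

variable {a b : ℝ} {μ ν : Measure ℝ} [IsFiniteMeasure μ] [IsFiniteMeasure ν]

lemma integrable_of_ae_mem_isCompact {S : Set ℝ} (hS : IsCompact S) (hμ : ∀ᵐ x ∂μ, x ∈ S)
    {f : ℝ → ℝ} (hf : ContinuousOn f S) : Integrable f μ := by
  rw [← Measure.restrict_eq_self_of_ae_mem hμ]
  exact hf.integrableOn_compact hS

lemma integrable_of_ae_mem_Icc (hμ : ∀ᵐ x ∂μ, x ∈ Icc a b) {f : ℝ → ℝ} (hf : Continuous f) :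
    Integrable f μ :=
  integrable_of_ae_mem_isCompact isCompact_Icc hμ hf.continuousOn

lemma abs_integral_sub_le_of_ae_mem_Icc (hμ : ∀ᵐ x ∂μ, x ∈ Icc a b) {f g : ℝ → ℝ}
    (hf : Continuous f) (hg : Continuous g) {ε : ℝ} (h : ∀ x ∈ Icc a b, |f x - g x| ≤ ε) :
    |∫ x, f x ∂μ - ∫ x, g x ∂μ| ≤ ε * μ.real univ := by
  rw [← integral_sub (integrable_of_ae_mem_Icc hμ hf) (integrable_of_ae_mem_Icc hμ hg)]
  exact norm_integral_le_of_norm_le_const (f := fun x => f x - g x) (hμ.mono h)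

lemma ext_of_forall_integral_polynomial_eq (hμ : ∀ᵐ x ∂μ, x ∈ Icc a b)
    (hν : ∀ᵐ x ∂ν, x ∈ Icc a b) (h : ∀ p : ℝ[X], ∫ x, p.eval x ∂μ = ∫ x, p.eval x ∂ν) :
    μ = ν := by
  refine ext_of_forall_integral_eq_of_IsFiniteMeasure fun f => ?_
  have close (ε : ℝ) (hε : 0 < ε) :
      |∫ x, f x ∂μ - ∫ x, f x ∂ν| ≤ ε * (μ.real univ + ν.real univ) := by
    obtain ⟨p, hp⟩ :=
      exists_polynomial_near_of_continuousOn a b f f.continuous.continuousOn ε hε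
    have closeμ := abs_integral_sub_le_of_ae_mem_Icc hμ p.continuous f.continuous
      fun x hx => (hp x hx).le
    have closeν := abs_integral_sub_le_of_ae_mem_Icc hν p.continuous f.continuous
      fun x hx => (hp x hx).le
    rw [h p, abs_sub_comm] at closeμ
    exact (abs_sub_le _ _ _).trans (by linarith)
  have bound_continuous : Continuous fun ε : ℝ => ε * (μ.real univ + ν.real univ) := by fun_prop
  have bound_tendsto : Tendsto (fun ε : ℝ => ε * (μ.real univ + ν.real univ)) (𝓝[>] 0) (𝓝 0) :=
    (bound_continuous.tendsto' 0 0 (zero_mul _)).mono_left nhdsWithin_le_nhds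
  have bound : |∫ x, f x ∂μ - ∫ x, f x ∂ν| ≤ 0 :=
    ge_of_tendsto bound_tendsto (eventually_mem_nhdsWithin.mono close)
  exact sub_eq_zero.1 (abs_nonpos_iff.1 bound)

lemma degree_chebyshevIcc (hab : a < b) (n : ℕ) : (chebyshevIcc a b n).degree = n := by
  have hslope : 2 / (b - a) ≠ 0 := (div_pos two_pos (sub_pos.2 hab)).ne'
  have natDegree_eq : (chebyshevIcc a b n).natDegree = n := by
    rw [chebyshevIcc, natDegree_comp, Polynomial.Chebyshev.natDegree_T,
      natDegree_linear hslope, mul_one, Int.natAbs_natCast]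
  rcases eq_or_ne n 0 with rfl | hn
  · simp [chebyshevIcc]
  · rw [degree_eq_iff_natDegree_eq_of_pos (Nat.pos_of_ne_zero hn), natDegree_eq]

lemma span_range_chebyshevIcc (hab : a < b) :
    Submodule.span ℝ (range (chebyshevIcc a b)) = ⊤ :=
  let chebyshevSequence : Polynomial.Sequence ℝ := ⟨chebyshevIcc a b, degree_chebyshevIcc hab⟩
  chebyshevSequence.span fun n => (leadingCoeff_ne_zero.2 (chebyshevSequence.ne_zero n)).isUnit

lemma ext_of_forall_integral_chebyshevIcc_eq (hab : a < b) (hμ : ∀ᵐ x ∂μ, x ∈ Icc a b)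
    (hν : ∀ᵐ x ∂ν, x ∈ Icc a b)
    (h : ∀ n, ∫ x, (chebyshevIcc a b n).eval x ∂μ = ∫ x, (chebyshevIcc a b n).eval x ∂ν) :
    μ = ν := by
  refine ext_of_forall_integral_polynomial_eq hμ hν fun p => ?_
  have hp : p ∈ Submodule.span ℝ (range (chebyshevIcc a b)) := by
    rw [span_range_chebyshevIcc hab]; trivial
  induction hp using Submodule.span_induction with
  | mem p hp => obtain ⟨n, rfl⟩ := hp; exact h n
  | zero => simp
  | add p q _ _ hp hq =>
    simp only [eval_add]
    rw [integral_add (integrable_of_ae_mem_Icc hμ p.continuous)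
      (integrable_of_ae_mem_Icc hμ q.continuous), hp, hq,
      integral_add (integrable_of_ae_mem_Icc hν p.continuous)
      (integrable_of_ae_mem_Icc hν q.continuous)]
  | smul c p _ hp => simp only [eval_smul, integral_smul, hp]

end ChebyshevMoments

section Identification

variable {a b : ℝ} {ω σ : Measure ℝ} [IsFiniteMeasure ω] [IsFiniteMeasure σ] {S : Set ℝ}

lemma two_mul_integral_chebyshevIcc_add_integral_balayage (hab : a < b)
    (hω : ∀ᵐ t ∂ω, t ∈ Icc a b) (hS : Bornology.IsBounded S) (hσS : ∀ᵐ t ∂σ, t ∈ S)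
    (hσ : ∀ᵐ t ∂σ, t ∉ Icc a b) {ℓ : ℝ}
    (hpot : ∀ x ∈ Icc a b, 2 * logPot ω x + logPot σ x = ℓ) {n : ℕ} (hn : n ≠ 0) :
    2 * ∫ t, (chebyshevIcc a b n).eval t ∂ω +
      ∫ x, balayage a b σ x * (chebyshevIcc a b n).eval x ∂arcsineMeasure a b = 0 := by
  have mul_integrable {f : ℝ → ℝ} (hf : Integrable f (arcsineMeasure a b)) :
      Integrable (fun x => f x * (chebyshevIcc a b n).eval x) (arcsineMeasure a b) :=
    have ⟨_, hM⟩ := exists_ae_norm_le_arcsineMeasure (chebyshevIcc a b n).continuous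
    hf.mul_bdd (Polynomial.continuous _).aestronglyMeasurable hM
  have hωi := mul_integrable (integrable_logPot hab (Metric.isBounded_Icc a b) hω)
  have hσi := mul_integrable (integrable_logPot hab hS hσS)
  have total : ∫ x, (2 * (logPot ω x * (chebyshevIcc a b n).eval x) +
      logPot σ x * (chebyshevIcc a b n).eval x) ∂arcsineMeasure a b = 0 := by
    rw [← mul_zero ℓ, ← integral_chebyshevIcc hab hn, ← integral_const_mul]
    refine integral_congr_ae ((ae_arcsineMeasure_mem_Icc a b).mono fun x hx => ?_)
    simp only [← hpot x hx]; ring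
  rw [integral_add (hωi.const_mul 2) hσi, integral_const_mul,
    integral_logPot_mul_chebyshevIcc_of_mem hab hω hn,
    integral_logPot_mul_chebyshevIcc_of_notMem hab hS hσS hσ hn] at total
  have hn' : (n : ℝ) ≠ 0 := by exact_mod_cast hn
  field_simp at total
  exact total.trans (mul_zero _)

@[fun_prop]
lemma measurable_balayage (a b : ℝ) (σ : Measure ℝ) [SFinite σ] : Measurable (balayage a b σ) :=
  (measurable_balayageKernel a b).stronglyMeasurable.integral_prod_left'.measurable

lemma balayage_nonneg (a b : ℝ) (σ : Measure ℝ) (x : ℝ) : 0 ≤ balayage a b σ x :=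
  integral_nonneg fun t => balayageKernel_nonneg a b t x

/-- The density with respect to `arcsineMeasure a b` of the equilibrium measure `ω` on `[a, b]` in
the external field `logPot σ / 2`. -/
def equilibriumDensity (a b : ℝ) (ω σ : Measure ℝ) (x : ℝ) : ℝ :=
  ω.real univ + σ.real univ / 2 - balayage a b σ x / 2

lemma isFiniteMeasure_withDensity_balayage (hab : a < b) (hσ : ∀ᵐ t ∂σ, t ∉ Icc a b) :
    IsFiniteMeasure ((arcsineMeasure a b).withDensity
      fun x => ENNReal.ofReal (balayage a b σ x / 2)) :=
  isFiniteMeasure_withDensity_ofReal ((integrable_balayage hab hσ).div_const 2).2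

lemma integral_withDensity_balayage (f : ℝ → ℝ) :
    ∫ x, f x ∂(arcsineMeasure a b).withDensity (fun x => ENNReal.ofReal (balayage a b σ x / 2)) =
      (∫ x, balayage a b σ x * f x ∂arcsineMeasure a b) / 2 := by
  rw [integral_withDensity_eq_integral_toReal_smul (by fun_prop)
    (.of_forall fun _ => ENNReal.ofReal_lt_top), ← integral_div]
  congr 1 with x
  rw [ENNReal.toReal_ofReal (div_nonneg (balayage_nonneg a b σ x) two_pos.le), smul_eq_mul]
  ring

lemma add_withDensity_balayage_eq (hab : a < b) (hω : ∀ᵐ t ∂ω, t ∈ Icc a b)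
    (hS : Bornology.IsBounded S) (hσS : ∀ᵐ t ∂σ, t ∈ S) (hσ : ∀ᵐ t ∂σ, t ∉ Icc a b) {ℓ : ℝ}
    (hpot : ∀ x ∈ Icc a b, 2 * logPot ω x + logPot σ x = ℓ) :
    ω + (arcsineMeasure a b).withDensity (fun x => ENNReal.ofReal (balayage a b σ x / 2)) =
      (arcsineMeasure a b).withDensity
        fun _ => ENNReal.ofReal (ω.real univ + σ.real univ / 2) := by
  have := isProbabilityMeasure_arcsineMeasure hab
  have := isFiniteMeasure_withDensity_balayage hab hσ
  have hα := ae_arcsineMeasure_mem_Icc a b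
  have hβ := (withDensity_absolutelyContinuous (arcsineMeasure a b)
    fun x => ENNReal.ofReal (balayage a b σ x / 2)).ae_le hα
  have := (arcsineMeasure a b).smul_finite
    (ENNReal.ofReal_ne_top (r := ω.real univ + σ.real univ / 2))
  rw [withDensity_const]
  refine ext_of_forall_integral_chebyshevIcc_eq hab (ae_add_measure_iff.2 ⟨hω, hβ⟩)
    (Measure.ae_smul_measure hα _) fun n => ?_
  rw [integral_add_measure (integrable_of_ae_mem_Icc hω (Polynomial.continuous _))
    (integrable_of_ae_mem_Icc hβ (Polynomial.continuous _)), integral_withDensity_balayage,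
    integral_smul_measure, ENNReal.toReal_ofReal (by positivity), smul_eq_mul]
  rcases eq_or_ne n 0 with rfl | hn
  · simp [chebyshevIcc, integral_balayage hab hσ]
  · rw [integral_chebyshevIcc hab hn]
    linarith [two_mul_integral_chebyshevIcc_add_integral_balayage hab hω hS hσS hσ hpot hn]

lemma ae_le_and_eq_withDensity_sub {α : Type*} {mα : MeasurableSpace α} {μ ν : Measure α}
    [SigmaFinite μ] {f g : α → ENNReal} [IsFiniteMeasure (μ.withDensity g)] (hg : Measurable g)
    (h : ν + μ.withDensity g = μ.withDensity f) : g ≤ᵐ[μ] f ∧ ν = μ.withDensity (f - g) := by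
  have hgf : g ≤ᵐ[μ] f := by
    refine ae_le_of_forall_setLIntegral_le_of_sigmaFinite hg fun s hs _ => ?_
    rw [← withDensity_apply _ hs, ← withDensity_apply _ hs, ← h]
    exact Measure.le_add_left le_rfl s
  exact ⟨hgf, by rw [Measure.withDensity_sub_of_le hg hgf, ← h, Measure.add_sub_cancel]⟩

theorem ae_nonneg_and_eq_withDensity_equilibriumDensity (hab : a < b) (hω : ∀ᵐ t ∂ω, t ∈ Icc a b)
    (hS : Bornology.IsBounded S) (hσS : ∀ᵐ t ∂σ, t ∈ S) (hσ : ∀ᵐ t ∂σ, t ∉ Icc a b) {ℓ : ℝ}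
    (hpot : ∀ x ∈ Icc a b, 2 * logPot ω x + logPot σ x = ℓ) :
    (∀ᵐ x ∂arcsineMeasure a b, 0 ≤ equilibriumDensity a b ω σ x) ∧
      ω = (arcsineMeasure a b).withDensity
        fun x => ENNReal.ofReal (equilibriumDensity a b ω σ x) := by
  have := isProbabilityMeasure_arcsineMeasure hab
  have := isFiniteMeasure_withDensity_balayage hab hσ
  obtain ⟨le_const, eq_sub⟩ := ae_le_and_eq_withDensity_sub (by fun_prop)
    (add_withDensity_balayage_eq hab hω hS hσS hσ hpot)
  refine ⟨le_const.mono fun x hx => ?_, eq_sub.trans ?_⟩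
  · rw [equilibriumDensity]
    linarith [(ENNReal.ofReal_le_ofReal_iff (by positivity)).1 hx]
  · congr 1 with x
    rw [equilibriumDensity,
      ENNReal.ofReal_sub _ (div_nonneg (balayage_nonneg a b σ x) two_pos.le), Pi.sub_apply]

end Identification

section Concavity

variable {a b t : ℝ} {ω σ : Measure ℝ} [IsFiniteMeasure σ] {C S : Set ℝ}

lemma subset_Iio_or_subset_Ioi_of_convex (hC : Convex ℝ C) (ht : t ∉ C) :
    C ⊆ Iio t ∨ C ⊆ Ioi t := by
  by_contra! h
  obtain ⟨⟨x, hx, hxt⟩, ⟨y, hy, hyt⟩⟩ := And.imp not_subset.1 not_subset.1 h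
  exact ht (hC.ordConnected.out hy hx ⟨not_lt.1 hyt, not_lt.1 hxt⟩)

lemma convexOn_inv_abs_sub (hC : Convex ℝ C) (ht : t ∉ C) :
    ConvexOn ℝ C fun x => |t - x|⁻¹ := by
  let dist (ε : ℝ) : ℝ →ᵃ[ℝ] ℝ := ε • (AffineMap.const ℝ ℝ t - AffineMap.id ℝ ℝ)
  have convexOn_inv_dist (ε : ℝ) := (convexOn_zpow (𝕜 := ℝ) (-1)).comp_affineMap (dist ε)
  rcases subset_Iio_or_subset_Ioi_of_convex hC ht with h | h
  · refine ((convexOn_inv_dist 1).subset (fun x hx => ?_) hC).congr fun x hx => ?_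
    · simpa [dist] using h hx
    · simp [dist, abs_of_pos (sub_pos.2 (mem_Iio.1 (h hx)))]
  · refine ((convexOn_inv_dist (-1)).subset (fun x hx => ?_) hC).congr fun x hx => ?_
    · simpa [dist] using h hx
    · simp [dist, abs_of_neg (sub_neg.2 (mem_Ioi.1 (h hx)))]

lemma convexOn_balayageKernel (hC : Convex ℝ C) (ht : t ∉ C) :
    ConvexOn ℝ C (balayageKernel a b t) :=
  (convexOn_inv_abs_sub hC ht).smul (Real.sqrt_nonneg _)

lemma integrable_balayageKernel_of_notMem (hS : IsCompact S) (hσ : ∀ᵐ t ∂σ, t ∈ S) {x : ℝ}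
    (hx : x ∉ S) : Integrable (fun t => balayageKernel a b t x) σ := by
  refine integrable_of_ae_mem_isCompact hS hσ (ContinuousOn.div ?_ ?_ fun t ht => ?_)
  · unfold wAbs; fun_prop
  · fun_prop
  · exact abs_ne_zero.2 (sub_ne_zero.2 (ne_of_mem_of_not_mem ht hx))

lemma convexOn_balayage (hC : Convex ℝ C) (hS : IsCompact S) (hσ : ∀ᵐ t ∂σ, t ∈ S)
    (hCS : Disjoint C S) : ConvexOn ℝ C (balayage a b σ) := by
  have hint (x : ℝ) (hx : x ∈ C) : Integrable (fun t => balayageKernel a b t x) σ :=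
    integrable_balayageKernel_of_notMem hS hσ (hCS.notMem_of_mem_left hx)
  refine ⟨hC, fun x hx y hy p q hp hq hpq => ?_⟩
  simp only [balayage, smul_eq_mul, ← integral_const_mul]
  rw [← integral_add ((hint x hx).const_mul p) ((hint y hy).const_mul q)]
  refine integral_mono_ae (hint _ (hC hx hy hp hq hpq))
    (((hint x hx).const_mul p).add ((hint y hy).const_mul q)) (hσ.mono fun t ht => ?_)
  exact (convexOn_balayageKernel hC (hCS.notMem_of_mem_right ht)).2 hx hy hp hq hpq

lemma concaveOn_equilibriumDensity (hC : Convex ℝ C) (hS : IsCompact S) (hσ : ∀ᵐ t ∂σ, t ∈ S)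
    (hCS : Disjoint C S) : ConcaveOn ℝ C (equilibriumDensity a b ω σ) := by
  have half_convex := (convexOn_balayage (a := a) (b := b) hC hS hσ hCS).smul (half_pos one_pos).le
  refine ((concaveOn_const (ω.real univ + σ.real univ / 2) hC).sub half_convex).congr fun x _ => ?_
  simp only [equilibriumDensity, Pi.sub_apply, smul_eq_mul]
  ring

lemma exists_isOpen_convex_disjoint_of_Icc_disjoint (hS : IsClosed S) (h : Disjoint (Icc a b) S) :
    ∃ C, IsOpen C ∧ Convex ℝ C ∧ Icc a b ⊆ C ∧ Disjoint C S := by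
  obtain ⟨δ, hδ, hsub⟩ := isCompact_Icc.exists_thickening_subset_open hS.isOpen_compl
    h.subset_compl_right
  exact ⟨_, Metric.isOpen_thickening, (convex_Icc a b).thickening δ,
    Metric.self_subset_thickening hδ _, disjoint_left.2 hsub⟩

lemma differentiableWithinAt_Ioi_of_concaveOn {f : ℝ → ℝ} (hf : ConcaveOn ℝ C f) {x : ℝ}
    (hx : x ∈ interior C) : DifferentiableWithinAt ℝ f (Ioi x) x := by
  simpa using (hf.neg.differentiableWithinAt_Ioi_of_mem_interior hx).neg

lemma differentiableWithinAt_Iio_of_concaveOn {f : ℝ → ℝ} (hf : ConcaveOn ℝ C f) {x : ℝ}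
    (hx : x ∈ interior C) : DifferentiableWithinAt ℝ f (Iio x) x := by
  simpa using (hf.neg.differentiableWithinAt_Iio_of_mem_interior hx).neg

end Concavity

section Endpoint

variable {s : Set ℝ} {l : Filter ℝ} {f ρ u v : ℝ → ℝ}

/-- The pure square-root behavior of a density `ρ` at an endpoint of its support: along `l`, which
is the approach to the endpoint, exactly one of `ρ * √u` and `ρ / √u` has a positive limit, where
`u` is the distance to the endpoint. -/
def HasSqrtBehavior (ρ u : ℝ → ℝ) (l : Filter ℝ) : Prop :=
  Xor (∃ L : ℝ, 0 < L ∧ Tendsto (fun x => ρ x * √(u x)) l (𝓝 L))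
    (∃ L : ℝ, 0 < L ∧ Tendsto (fun x => ρ x / √(u x)) l (𝓝 L))

lemma tendsto_mul_sqrt_of_tendsto_div_sqrt (hu : Tendsto u l (𝓝 0)) (hu_pos : ∀ᶠ x in l, 0 < u x)
    {L : ℝ} (h : Tendsto (fun x => ρ x / √(u x)) l (𝓝 L)) :
    Tendsto (fun x => ρ x * √(u x)) l (𝓝 0) := by
  refine (mul_zero L ▸ h.mul hu).congr' (hu_pos.mono fun x hx => ?_)
  have := Real.sqrt_pos.2 hx
  field_simp
  rw [Real.sq_sqrt hx.le]

lemma HasSqrtBehavior.of_tendsto [l.NeBot] (hu : Tendsto u l (𝓝 0)) (hu_pos : ∀ᶠ x in l, 0 < u x)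
    {M : ℝ} (hv : Tendsto v l (𝓝 M)) (hM : 0 < M) (hρ : ∀ᶠ x in l, ρ x = f x / (v x * √(u x)))
    (hf : (∃ L, 0 < L ∧ Tendsto f l (𝓝 L)) ∨ ∃ L, 0 < L ∧ Tendsto (fun x => f x / u x) l (𝓝 L)) :
    HasSqrtBehavior ρ u l := by
  have exclusive {L L' : ℝ} (hL : 0 < L) (h : Tendsto (fun x => ρ x * √(u x)) l (𝓝 L))
      (h' : Tendsto (fun x => ρ x / √(u x)) l (𝓝 L')) : False :=
    hL.ne' (tendsto_nhds_unique h (tendsto_mul_sqrt_of_tendsto_div_sqrt hu hu_pos h'))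
  obtain ⟨L, hL, hfL⟩ | ⟨L, hL, hfL⟩ := hf
  · have limit : Tendsto (fun x => ρ x * √(u x)) l (𝓝 (L / M)) := by
      refine (hfL.div hv hM.ne').congr' ((hρ.and hu_pos).mono fun x ⟨hρx, hx⟩ => ?_)
      have := Real.sqrt_pos.2 hx
      simp only [Pi.div_apply, hρx]
      field_simp
    exact .inl ⟨⟨_, div_pos hL hM, limit⟩, fun ⟨_, _, h⟩ => exclusive (div_pos hL hM) limit h⟩
  · have limit : Tendsto (fun x => ρ x / √(u x)) l (𝓝 (L / M)) := by
      refine (hfL.div hv hM.ne').congr' ((hρ.and hu_pos).mono fun x ⟨hρx, hx⟩ => ?_)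
      simp only [Pi.div_apply, hρx]
      rw [div_div, div_div, mul_assoc, Real.mul_self_sqrt hx.le, mul_comm (v x)]
    exact .inr ⟨⟨_, div_pos hL hM, limit⟩, fun ⟨_, hL', h⟩ => exclusive hL' h limit⟩

lemma exists_pos_tendsto_or_tendsto_div {c D ε : ℝ} (hcs : c ∉ s)
    (hf : HasDerivWithinAt f D s c) (hfc : 0 ≤ f c) (hD : f c = 0 → 0 < D / ε) :
    (∃ L, 0 < L ∧ Tendsto f (𝓝[s] c) (𝓝 L)) ∨
      ∃ L, 0 < L ∧ Tendsto (fun x => f x / (ε * (x - c))) (𝓝[s] c) (𝓝 L) := by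
  rcases hfc.eq_or_lt with hfc | hfc
  · have slope_tendsto := (hasDerivWithinAt_iff_tendsto_slope' hcs).1 hf
    refine .inr ⟨D / ε, hD hfc.symm, (slope_tendsto.div_const ε).congr fun x => ?_⟩
    rw [slope_def_field, ← hfc, sub_zero, div_div, mul_comm]
  · exact .inl ⟨f c, hfc, hf.continuousWithinAt⟩

lemma pos_of_concaveOn_of_mem_openSegment {C : Set ℝ} (hf : ConcaveOn ℝ C f) {x y z : ℝ}
    (hx : x ∈ C) (hy : y ∈ C) (hfx : 0 < f x) (hfy : 0 ≤ f y) (hz : z ∈ openSegment ℝ x y) :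
    0 < f z := by
  obtain ⟨p, q, hp, hq, hpq, rfl⟩ := hz
  have : 0 < p • f x + q • f y := by simp only [smul_eq_mul]; positivity
  exact this.trans_le (hf.2 hx hy hp.le hq.le hpq)

lemma pos_of_concaveOn_of_mem_Ioo {a b : ℝ} (hf : ConcaveOn ℝ (Icc a b) f)
    (hf0 : ∀ x ∈ Icc a b, 0 ≤ f x) (hne : ∃ y ∈ Icc a b, f y ≠ 0) {x : ℝ} (hx : x ∈ Ioo a b) :
    0 < f x := by
  obtain ⟨y, hy, hfy⟩ := hne
  have hab : a ≤ b := hy.1.trans hy.2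
  have hfy := (hf0 y hy).lt_of_ne' hfy
  rcases lt_trichotomy x y with hxy | rfl | hxy
  · refine pos_of_concaveOn_of_mem_openSegment hf hy (left_mem_Icc.2 hab) hfy
      (hf0 a (left_mem_Icc.2 hab)) ?_
    rw [openSegment_symm, openSegment_eq_Ioo (hx.1.trans hxy)]
    exact ⟨hx.1, hxy⟩
  · exact hfy
  · refine pos_of_concaveOn_of_mem_openSegment hf hy (right_mem_Icc.2 hab) hfy
      (hf0 b (right_mem_Icc.2 hab)) ?_
    rw [openSegment_eq_Ioo (hxy.trans hx.2)]
    exact ⟨hxy, hx.2⟩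

end Endpoint

section ArcsineDensity

variable {a b m : ℝ} {C : Set ℝ} {f ρ : ℝ → ℝ}

lemma hasSqrtBehavior_left_of_concaveOn (hf : ConcaveOn ℝ C f) (hC : Icc a b ⊆ interior C)
    (hm : m ∈ Ioo a b) (hfa : 0 ≤ f a) (hfm : 0 < f m)
    (hρ : ∀ x ∈ Ioo a b, ρ x = f x / (Real.pi * √((x - a) * (b - x)))) :
    HasSqrtBehavior ρ (fun x => x - a) (𝓝[>] a) := by
  have hab : a < b := hm.1.trans hm.2
  have ha : a ∈ interior C := hC (left_mem_Icc.2 hab.le)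
  have hmC : m ∈ C := interior_subset (hC (Ioo_subset_Icc_self hm))
  have deriv := (differentiableWithinAt_Ioi_of_concaveOn hf ha).hasDerivWithinAt
  have deriv_pos (hfa : f a = 0) : 0 < derivWithin f (Ioi a) a / 1 := by
    have slope_le := hf.slope_le_of_hasDerivWithinAt_Ioi (interior_subset ha) hmC hm.1 deriv
    rw [slope_def_field, hfa, sub_zero] at slope_le
    exact div_pos ((div_pos hfm (sub_pos.2 hm.1)).trans_le slope_le) one_pos
  refine .of_tendsto (f := f) (v := fun x => Real.pi * √(b - x)) (M := Real.pi * √(b - a))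
    (((continuous_sub_right a).tendsto' a 0 (sub_self a)).mono_left nhdsWithin_le_nhds)
    (eventually_mem_nhdsWithin.mono fun x hx => sub_pos.2 hx)
    (Continuous.tendsto (by fun_prop) a |>.mono_left nhdsWithin_le_nhds)
    (mul_pos Real.pi_pos (Real.sqrt_pos.2 (sub_pos.2 hab)))
    ((eventually_mem_set.2 (Ioo_mem_nhdsGT hab)).mono fun x hx => ?_) ?_
  · rw [hρ x hx, mul_comm (x - a), Real.sqrt_mul (sub_nonneg.2 hx.2.le), mul_assoc]
  · simpa only [one_mul] using
      exists_pos_tendsto_or_tendsto_div (ε := 1) self_notMem_Ioi deriv hfa deriv_pos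

lemma hasSqrtBehavior_right_of_concaveOn (hf : ConcaveOn ℝ C f) (hC : Icc a b ⊆ interior C)
    (hm : m ∈ Ioo a b) (hfb : 0 ≤ f b) (hfm : 0 < f m)
    (hρ : ∀ x ∈ Ioo a b, ρ x = f x / (Real.pi * √((x - a) * (b - x)))) :
    HasSqrtBehavior ρ (fun x => b - x) (𝓝[<] b) := by
  have hab : a < b := hm.1.trans hm.2
  have hb : b ∈ interior C := hC (right_mem_Icc.2 hab.le)
  have hmC : m ∈ C := interior_subset (hC (Ioo_subset_Icc_self hm))
  have deriv := (differentiableWithinAt_Iio_of_concaveOn hf hb).hasDerivWithinAt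
  have deriv_neg (hfb : f b = 0) : 0 < derivWithin f (Iio b) b / -1 := by
    have le_slope := hf.le_slope_of_hasDerivWithinAt_Iio hmC (interior_subset hb) hm.2 deriv
    rw [slope_def_field, hfb, zero_sub, neg_div] at le_slope
    have := div_pos hfm (sub_pos.2 hm.2)
    exact div_pos_of_neg_of_neg (by linarith) (by norm_num)
  refine .of_tendsto (f := f) (v := fun x => Real.pi * √(x - a)) (M := Real.pi * √(b - a))
    (((continuous_sub_left b).tendsto' b 0 (sub_self b)).mono_left nhdsWithin_le_nhds)
    (eventually_mem_nhdsWithin.mono fun x hx => sub_pos.2 hx)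
    (Continuous.tendsto (by fun_prop) b |>.mono_left nhdsWithin_le_nhds)
    (mul_pos Real.pi_pos (Real.sqrt_pos.2 (sub_pos.2 hab)))
    ((eventually_mem_set.2 (Ioo_mem_nhdsLT hab)).mono fun x hx => ?_) ?_
  · rw [hρ x hx, Real.sqrt_mul (sub_nonneg.2 hx.1.le), mul_assoc]
  · simpa only [neg_one_mul, neg_sub] using
      exists_pos_tendsto_or_tendsto_div (ε := -1) self_notMem_Iio deriv hfb deriv_neg

lemma nonneg_of_ae_arcsineMeasure_nonneg (hab : a < b) (hf : ContinuousOn f (Icc a b))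
    (h : ∀ᵐ x ∂arcsineMeasure a b, 0 ≤ f x) {x : ℝ} (hx : x ∈ Icc a b) : 0 ≤ f x := by
  have density_ne_zero : ∀ᵐ x ∂volume.restrict (Icc a b),
      ENNReal.ofReal (1 / (Real.pi * √((x - a) * (b - x)))) ≠ 0 := by
    rw [← Measure.restrict_congr_set Ioo_ae_eq_Icc]
    filter_upwards [ae_restrict_mem measurableSet_Ioo] with x hx
    have := mul_pos (sub_pos.2 hx.1) (sub_pos.2 hx.2)
    exact (ENNReal.ofReal_pos.2 (by positivity)).ne'
  have ae_nonneg : ∀ᵐ x ∂volume.restrict (Icc a b), 0 ≤ f x :=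
    (withDensity_absolutelyContinuous' (by fun_prop) density_ne_zero).ae_le h
  have eq_abs := Measure.eqOn_Icc_of_ae_eq volume hab.ne
    (ae_nonneg.mono fun x hx => (abs_of_nonneg hx).symm) hf hf.abs
  exact eq_abs hx ▸ abs_nonneg (f x)

lemma withDensity_arcsineMeasure_ofReal (a b : ℝ) (hf : Measurable f) :
    (arcsineMeasure a b).withDensity (fun x => ENNReal.ofReal (f x)) =
      volume.withDensity fun x => ENNReal.ofReal
        ((Icc a b).indicator (fun x => f x / (Real.pi * √((x - a) * (b - x)))) x) := by
  rw [arcsineMeasure, ← withDensity_mul _ (by fun_prop) (by fun_prop),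
    ← withDensity_indicator measurableSet_Icc]
  congr 1 with x
  by_cases hx : x ∈ Icc a b
  · rw [indicator_of_mem hx, indicator_of_mem hx, Pi.mul_apply,
      ← ENNReal.ofReal_mul (by positivity), one_div_mul_eq_div]
  · simp [hx]

end ArcsineDensity

section Equilibrium

variable {ι : Type*} {a b x : ℝ} {ω σ : Measure ℝ} [IsFiniteMeasure ω] [IsFiniteMeasure σ]
  {S : Set ℝ} {μ : ι → Measure ℝ}

theorem exists_hasSqrtBehavior_of_equilibrium (hab : a < b) (hω : ∀ᵐ t ∂ω, t ∈ Icc a b)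
    (hω0 : ω ≠ 0) (hS : IsCompact S) (hσ : ∀ᵐ t ∂σ, t ∈ S) (hdisj : Disjoint (Icc a b) S) {ℓ : ℝ}
    (hpot : ∀ x ∈ Icc a b, 2 * logPot ω x + logPot σ x = ℓ) :
    ∃ ρ : ℝ → ℝ, ω = volume.withDensity (fun x => ENNReal.ofReal (ρ x)) ∧
      (∀ x ∈ Ioo a b, 0 < ρ x) ∧ HasSqrtBehavior ρ (fun x => b - x) (𝓝[Ioo a b] b) ∧
      HasSqrtBehavior ρ (fun x => x - a) (𝓝[Ioo a b] a) := by
  obtain ⟨C, hCo, hCc, hC, hCS⟩ := exists_isOpen_convex_disjoint_of_Icc_disjoint hS.isClosed hdisj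
  obtain ⟨ae_nonneg, hωh⟩ := ae_nonneg_and_eq_withDensity_equilibriumDensity hab hω hS.isBounded hσ
    (hσ.mono fun t ht => hdisj.notMem_of_mem_right ht) hpot
  set h := equilibriumDensity a b ω σ
  have concave : ConcaveOn ℝ C h := concaveOn_equilibriumDensity hCc hS hσ hCS
  have nonneg (x : ℝ) (hx : x ∈ Icc a b) : 0 ≤ h x :=
    nonneg_of_ae_arcsineMeasure_nonneg hab ((concave.continuousOn hCo).mono hC) ae_nonneg hx
  have ne_zero : ∃ y ∈ Icc a b, h y ≠ 0 := by
    by_contra! zero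
    refine hω0 (hωh.trans ((withDensity_congr_ae ?_).trans withDensity_zero))
    filter_upwards [ae_arcsineMeasure_mem_Icc a b] with x hx
    simp [zero x hx]
  have pos (x : ℝ) (hx : x ∈ Ioo a b) : 0 < h x :=
    pos_of_concaveOn_of_mem_Ioo (concave.subset hC (convex_Icc a b)) nonneg ne_zero hx
  have density_eq (x : ℝ) (hx : x ∈ Ioo a b) :=
    indicator_of_mem (Ioo_subset_Icc_self hx) fun x => h x / (Real.pi * √((x - a) * (b - x)))
  obtain ⟨m, hm⟩ := nonempty_Ioo.2 hab
  rw [nhdsWithin_Ioo_eq_nhdsLT hab, nhdsWithin_Ioo_eq_nhdsGT hab]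
  have hC' : Icc a b ⊆ interior C := hC.trans hCo.interior_eq.ge
  refine ⟨_, hωh.trans (withDensity_arcsineMeasure_ofReal a b ?_), fun x hx => ?_,
    hasSqrtBehavior_right_of_concaveOn concave hC' hm (nonneg b (right_mem_Icc.2 hab.le)) (pos m hm)
      density_eq,
    hasSqrtBehavior_left_of_concaveOn concave hC' hm (nonneg a (left_mem_Icc.2 hab.le)) (pos m hm)
      density_eq⟩
  · exact measurable_const.sub ((measurable_balayage a b σ).div_const 2)
  · have := pos x hx
    have := mul_pos (sub_pos.2 hx.1) (sub_pos.2 hx.2)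
    rw [density_eq x hx]
    positivity

lemma ae_mem_msupp (μ : Measure ℝ) : ∀ᵐ t ∂μ, t ∈ msupp μ := by
  refine measure_null_of_locally_null _ fun x hx => ?_
  obtain ⟨ε, hε, null⟩ : ∃ ε > 0, μ (Metric.ball x ε) = 0 := by
    simpa only [msupp, mem_compl_iff, mem_ofPred_eq, not_forall, not_lt, nonpos_iff_eq_zero,
      exists_prop] using hx
  exact ⟨_, mem_nhdsWithin_of_mem_nhds (Metric.ball_mem_nhds x hε), null⟩

lemma ne_zero_of_mem_msupp {μ : Measure ℝ} (hx : x ∈ msupp μ) : μ ≠ 0 := by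
  rintro rfl
  exact lt_irrefl _ (hx 1 one_pos)

lemma logPot_finsetSum {s : Finset ι}
    (h : ∀ i ∈ s, Integrable (fun t => Real.log |x - t|) (μ i)) :
    logPot (∑ i ∈ s, μ i) x = ∑ i ∈ s, logPot (μ i) x := by
  simp only [logPot, integral_finsetSum_measure h, Finset.sum_neg_distrib]

lemma integrable_log_abs_sub_of_notMem (hS : IsCompact S) (hσ : ∀ᵐ t ∂σ, t ∈ S) (hx : x ∉ S) :
    Integrable (fun t => Real.log |x - t|) σ :=
  integrable_of_ae_mem_isCompact hS hσ <| ContinuousOn.log (by fun_prop) fun _ ht =>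
    abs_ne_zero.2 (sub_ne_zero.2 (ne_of_mem_of_not_mem ht hx).symm)

theorem vec_equilibrium_density_square_root_behavior_general [Fintype ι] {A B : ι → ℝ}
    {ω : ι → Measure ℝ} [∀ i, IsFiniteMeasure (ω i)]
    (hdisj : Pairwise (Function.onFun Disjoint fun i => Icc (A i) (B i)))
    (hsupp : ∀ i, msupp (ω i) = Icc (A i) (B i)) {i : ι} (hAB : A i < B i) {ℓ : ℝ}
    (hpot : ∀ x ∈ Icc (A i) (B i), logPot (ω i) x + ∑ j, logPot (ω j) x = ℓ) :
    ∃ ρ : ℝ → ℝ, ω i = volume.withDensity (fun x => ENNReal.ofReal (ρ x)) ∧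
      (∀ x ∈ Ioo (A i) (B i), 0 < ρ x) ∧
      HasSqrtBehavior ρ (fun x => B i - x) (𝓝[Ioo (A i) (B i)] (B i)) ∧
      HasSqrtBehavior ρ (fun x => x - A i) (𝓝[Ioo (A i) (B i)] (A i)) := by
  classical
  have ae_mem (j : ι) : ∀ᵐ t ∂ω j, t ∈ Icc (A j) (B j) := hsupp j ▸ ae_mem_msupp (ω j)
  have disjoint_of_mem {j : ι} (hj : j ∈ Finset.univ.erase i) :
      Disjoint (Icc (A i) (B i)) (Icc (A j) (B j)) := hdisj (Finset.ne_of_mem_erase hj).symm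
  have ω_ne_zero : ω i ≠ 0 := ne_zero_of_mem_msupp (hsupp i ▸ left_mem_Icc.2 hAB.le)
  refine exists_hasSqrtBehavior_of_equilibrium (σ := ∑ j ∈ Finset.univ.erase i, ω j)
    (S := ⋃ j ∈ Finset.univ.erase i, Icc (A j) (B j)) (ℓ := ℓ) hAB (ae_mem i) ω_ne_zero
    (Finset.isCompact_biUnion _ fun _ _ => isCompact_Icc) ?_
    (disjoint_iUnion₂_right.2 fun _ hj => disjoint_of_mem hj) fun x hx => ?_
  · exact ae_finsetSum_measure_iff.2 fun j hj => (ae_mem j).mono fun t ht => mem_biUnion hj ht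
  · rw [logPot_finsetSum fun j hj => integrable_log_abs_sub_of_notMem isCompact_Icc (ae_mem j)
      ((disjoint_of_mem hj).notMem_of_mem_left hx), ← hpot x hx,
      ← Finset.add_sum_erase _ _ (Finset.mem_univ i)]
    ring

end Equilibrium

section Angelesco

variable {d : ℕ} {μ ω : Fin d → Measure ℝ} {lo hi c A B : Fin d → ℝ}

lemma VecEquil.isFiniteMeasure (hEq : VecEquil d lo hi c ω A B) (i : Fin d) :
    IsFiniteMeasure (ω i) :=
  ⟨hEq.mass i ▸ ENNReal.ofReal_lt_top⟩

lemma VecEquil.pairwise_disjoint_Icc (hEq : VecEquil d lo hi c ω A B)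
    (hAng : Angelesco d μ lo hi) :
    Pairwise (Function.onFun Disjoint fun i => Icc (A i) (B i)) := by
  refine pairwise_disjoint_on _ |>.2 fun i j hij => ?_
  refine disjoint_left.2 fun x hxi hxj => ?_
  exact (hAng.sep i j hij).not_ge ((hEq.endpoints j).1.trans
    (hxj.1.trans (hxi.2.trans (hEq.endpoints i).2.2)))

end Angelesco

/-- Proposition 2.2: the components of the vector equilibrium measure of an
Angelesco system are absolutely continuous with non-vanishing density on the open support, and
at each endpoint the density has pure square-root behavior (blow-up or vanishing). -/
theorem vec_equilibrium_density_square_root_behavior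
    (d : ℕ) (μ : Fin d → Measure ℝ) (lo hi : Fin d → ℝ)
    (hAng : Angelesco d μ lo hi)
    (c : Fin d → ℝ) (hc : ∀ i, c i ∈ Set.Ioo (0 : ℝ) 1) (hcsum : ∑ i, c i = 1)
    (A B : Fin d → ℝ) (ω : Fin d → Measure ℝ)
    (hEq : VecEquil d lo hi c ω A B) :
    ∀ i, ∃ ρ : ℝ → ℝ,
      -- absolute continuity: `dω_{c,i} = ρ dx`
      ω i = volume.withDensity (fun x => ENNReal.ofReal (ρ x)) ∧
      -- non-vanishing of the density on `(α_{c,i}, β_{c,i})`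
      (∀ x ∈ Set.Ioo (A i) (B i), 0 < ρ x) ∧
      -- square-root behavior at the right endpoint `β_{c,i}`: exactly one of the two limits
      -- `lim ρ(x) (β−x)^{1/2}` or `lim ρ(x) (β−x)^{−1/2}` exists, positive and finite
      Xor'
        (∃ L : ℝ, 0 < L ∧ Tendsto (fun x => ρ x * Real.sqrt (B i - x))
          (𝓝[Set.Ioo (A i) (B i)] (B i)) (𝓝 L))
        (∃ L : ℝ, 0 < L ∧ Tendsto (fun x => ρ x / Real.sqrt (B i - x))
          (𝓝[Set.Ioo (A i) (B i)] (B i)) (𝓝 L)) ∧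
      -- and the analogous claim at the left endpoint `α_{c,i}`
      Xor'
        (∃ L : ℝ, 0 < L ∧ Tendsto (fun x => ρ x * Real.sqrt (x - A i))
          (𝓝[Set.Ioo (A i) (B i)] (A i)) (𝓝 L))
        (∃ L : ℝ, 0 < L ∧ Tendsto (fun x => ρ x / Real.sqrt (x - A i))
          (𝓝[Set.Ioo (A i) (B i)] (A i)) (𝓝 L)) := by
  have := hEq.isFiniteMeasure
  exact fun i => vec_equilibrium_density_square_root_behavior_general
    (hEq.pairwise_disjoint_Icc hAng) hEq.supp (hEq.endpoints i).2.1 (hEq.equil i).choose_spec.1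

end
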